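/- Let ζ = exp(2πi/5) and define R̃(z,q) = (1+z)(z²q;q)_∞ (z^{-2}q;q)_∞ (q;q)_∞ R(z;q). Then U_{5,0}( R̃(ζ,q) ) = (1+ζ) J_5² J_{5,2}² / J_{5,1}² − (2 + 2ζ + ζ³) ( R̃(q,q⁵) − J_{5,2} ), where the J-products are in the variable q. -/

import Mathlib

/-!
The proof passes through a Hecke-type double series for the modified rank generating function,

  `R̃(z,q) = Σ_{N ≥ 0} Σ_{|2t| ≤ N} (-1)^{N+t} q^{N(N+1)/2 - t(3t+1)/2} (z^{N+1} + z^{-N})`,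

valid for `0 < |q| < 1` and `|q| < |z| < |q|⁻¹`, subject to absolute convergence of the double series
(`rankGFtilde_hasSum`, `heckeTerm_absSum`).

*The double series.* Sorting partitions by their largest part turns `R(w⁻¹;q)` into a single sum
(`rank_family`), and comparing the sums at `w` and `wq` gives a first order `q`-difference equation
(`rank_U`). Multiplied by the theta function of `w²` it becomes an equation for `R̃` whose right side
is a theta series by the Jacobi triple product (`rankG_functional`). On the level of Laurent
coefficients this is a first order recurrence, which determines them up to one constant; the
constant is fixed by the factor `1 + w`, that is, by vanishing at `w = -1` (`rankG_coeff`).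

*Extraction.* Let `q = x⁵`. The coefficients `a n` are the coefficients of the double series at
`z = ζ`, and the exponents divisible by `5` are selected by averaging over `x ↦ ζ^j x`
(`U5_hecke`). The exponent is divisible by `5` exactly when `N ≡ 0, 4` and `t ≡ 0, 3`, or
`N ≡ 1, 3` and `t ≡ 4` modulo `5` (`heckeExp_mod_five`); the factor `ζ^{N+1} + ζ^{-N}` is `1 + ζ` in
the first case and `ζ² + ζ⁴` in the second (`zeta5_factor`).

*The two pieces.* Substituting `(N, t) = (5n + 1, -5s - 1)` and `(5n + 3, -5s - 1)` in the second
case gives the two halves of the double series of `R̃(q,q⁵)`, up to terms on the boundary of the cone,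
which form the theta series `J_{5,2}` (`sideTerm_absSum`). The sum over both cases with the factor
in `ζ` left out is the `5`-section of half of the double series at `z = 1`. There
`R̃(1,x) = 2 (x;x)_∞²`, and since pentagonal numbers are `0, 1, 2` modulo `5`, this section is the
square of the section of `(x;x)_∞` (`pureTerm_absSum`), which is `J_5 J_{5,2} / J_{5,1}`
(`penFive_eq`). Since `ζ² + ζ⁴ - (1 + ζ) = -(2 + 2ζ + ζ³)`, adding the pieces gives the claim for
`q ≠ 0`; for `q = 0` both sides are `1 + ζ`.
-/

/-- The q-Pochhammer symbol `(a;q)_∞ = ∏_{k≥0} (1 - a q^k)`. -/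
noncomputable def qPochInf (a q : ℂ) : ℂ := ∏' k : ℕ, (1 - a * q ^ k)

/-- The Dyson rank of a partition: largest part minus number of parts. -/
noncomputable def partitionRank {n : ℕ} (p : n.Partition) : ℤ :=
  (p.parts.sup : ℤ) - p.parts.card

/-- The rank generating function `R(z;q) = Σ_{n≥0} Σ_m N(m,n) z^m q^n`. -/
noncomputable def rankGF (z q : ℂ) : ℂ :=
  ∑' n : ℕ, (∑ p : n.Partition, z ^ partitionRank p) * q ^ n

/-- `Jba b a q` is `J_{b,a} = (q^a;q^b)_∞ (q^{b-a};q^b)_∞ (q^b;q^b)_∞`. -/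
noncomputable def Jba (b a : ℕ) (q : ℂ) : ℂ :=
  qPochInf (q ^ a) (q ^ b) * qPochInf (q ^ (b - a)) (q ^ b) * qPochInf (q ^ b) (q ^ b)

/-- `Jb b q` is `J_b = (q^b;q^b)_∞`. -/
noncomputable def Jb (b : ℕ) (q : ℂ) : ℂ := qPochInf (q ^ b) (q ^ b)

/-- `ζ = exp(2πi/5)`. -/
noncomputable def zeta5 : ℂ := Complex.exp (2 * Real.pi * Complex.I / 5)

/-- `R̃(z,q) = (1+z)(z²q;q)_∞ (z^{-2}q;q)_∞ (q;q)_∞ R(z;q)`. -/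
noncomputable def rankGFtilde (z q : ℂ) : ℂ :=
  (1 + z) * qPochInf (z ^ 2 * q) q * qPochInf (z ^ (-2 : ℤ) * q) q * qPochInf q q *
    rankGF z q

open Filter Topology

/-! ### Laurent expansions and uniqueness of their coefficients -/

/-- `f` is, at every point of `S`, the sum of the Laurent series with coefficients `c`, with absolute
convergence. Off `S` nothing is asked of `f`. -/
def LaurentOn (S : Set ℂ) (c : ℤ → ℂ) (f : ℂ → ℂ) : Prop :=
  ∀ z ∈ S, Summable (fun k : ℤ => ‖c k * z ^ k‖) ∧ HasSum (fun k : ℤ => c k * z ^ k) (f z)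

theorem integral_circle_exp (n : ℤ) :
    ∫ θ in (0:ℝ)..(2 * Real.pi), Complex.exp (n * θ * Complex.I) =
      if n = 0 then (2 * Real.pi : ℂ) else 0 := by
  split_ifs with h
  · subst h; simp
  · have hn : (n : ℂ) * Complex.I ≠ 0 := by simp [h]
    have := integral_exp_mul_complex (a := 0) (b := 2 * Real.pi) hn
    have h2 : ∀ θ : ℝ, Complex.exp (n * θ * Complex.I) = Complex.exp (n * Complex.I * θ) := by
      intro θ; ring_nf
    simp_rw [h2, this]
    have : (n : ℂ) * Complex.I * ((2 * Real.pi : ℝ) : ℂ) = n * (2 * Real.pi * Complex.I) := by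
      push_cast; ring
    rw [this, Complex.exp_int_mul_two_pi_mul_I]
    simp

/-- A Laurent series vanishing on a circle has zero coefficients: integrate it against `e^{-imθ}`. -/
theorem laurent_coeff_zero {ρ : ℝ} (hρ : 0 < ρ) {c : ℤ → ℂ}
    (hs : Summable (fun k : ℤ => ‖c k‖ * ρ ^ k))
    (h : ∀ z : ℂ, ‖z‖ = ρ → HasSum (fun k : ℤ => c k * z ^ k) 0) : c = 0 := by
  funext m
  let F : ℤ → C(ℝ, ℂ) := fun k =>
    ⟨fun θ => c k * ρ ^ k * Complex.exp (((k - m : ℤ) : ℂ) * θ * Complex.I), by fun_prop⟩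
  have hF : ∀ k θ, ‖F k θ‖ = ‖c k‖ * ρ ^ k := by
    intro k θ
    have : (((k - m : ℤ) : ℂ) * θ * Complex.I) = (((k - m : ℤ) * θ : ℝ) : ℂ) * Complex.I := by
      push_cast; ring
    simp only [F, ContinuousMap.coe_mk, norm_mul, this, Complex.norm_exp_ofReal_mul_I]
    simp [abs_of_pos hρ]
  have hsum : Summable fun k => ‖(F k).restrict
      (⟨Set.uIcc 0 (2 * Real.pi), isCompact_uIcc⟩ : TopologicalSpace.Compacts ℝ)‖ := by
    refine Summable.of_nonneg_of_le (fun _ => norm_nonneg _) (fun k => ?_) hs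
    rw [ContinuousMap.norm_le _ (by positivity)]
    intro x
    exact (hF k x).le
  have key := intervalIntegral.hasSum_intervalIntegral_of_summable_norm hsum
  have hz : ∀ θ : ℝ, ∑' k, F k θ = 0 := by
    intro θ
    have h1 := (h (ρ * Complex.exp (θ * Complex.I)) (by
      simp [Complex.norm_exp_ofReal_mul_I, abs_of_pos hρ])).mul_right
        (Complex.exp (-(m * θ * Complex.I)))
    rw [zero_mul] at h1
    rw [← h1.tsum_eq]
    refine tsum_congr fun k => ?_
    simp only [F, ContinuousMap.coe_mk, mul_zpow, ← Complex.exp_int_mul, mul_assoc,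
      ← Complex.exp_add]
    congr 3
    push_cast; ring
  simp_rw [hz] at key
  simp only [intervalIntegral.integral_zero] at key
  have h3 : ∀ k, ∫ θ in (0:ℝ)..(2 * Real.pi), F k θ =
      if k = m then c m * ρ ^ m * (2 * Real.pi) else 0 := by
    intro k
    simp only [F, ContinuousMap.coe_mk, intervalIntegral.integral_const_mul, integral_circle_exp,
      sub_eq_zero]
    split_ifs with hk
    · subst hk; rfl
    · simp
  simp_rw [h3] at key
  have h4 := key.unique (hasSum_ite_eq m _)
  have : (ρ : ℂ) ^ m ≠ 0 := zpow_ne_zero _ (by exact_mod_cast hρ.ne')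
  simpa [this, Real.pi_ne_zero] using h4.symm

/-- Two Laurent expansions of the same function that share a circle have the same coefficients. -/
theorem LaurentOn.unique {S : Set ℂ} {c c' : ℤ → ℂ} {f : ℂ → ℂ} {ρ : ℝ} (hρ : 0 < ρ)
    (hS : ∀ z : ℂ, ‖z‖ = ρ → z ∈ S) (h : LaurentOn S c f) (h' : LaurentOn S c' f) : c = c' := by
  have h0 := laurent_coeff_zero (c := c - c') hρ ?_ ?_
  · exact sub_eq_zero.mp h0
  · have hm : (ρ : ℂ) ∈ S := hS _ (by simp [abs_of_pos hρ])
    refine Summable.of_nonneg_of_le (fun _ => by positivity) (fun k => ?_)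
      ((h _ hm).1.add (h' _ hm).1)
    have e : ∀ x : ℂ, ‖x * (ρ : ℂ) ^ k‖ = ‖x‖ * ρ ^ k := by
      intro x; simp [abs_of_pos hρ]
    rw [e, e, ← add_mul]
    gcongr
    exact norm_sub_le _ _
  · intro z hz
    have := (h z (hS z hz)).2.sub (h' z (hS z hz)).2
    rw [sub_self] at this
    simpa [sub_mul] using this

/-- An absolutely convergent family of monomials, with exponents possibly repeated, is a Laurent
expansion after collecting equal exponents. -/
theorem LaurentOn.of_family {ι : Type*} {S : Set ℂ} {f : ℂ → ℂ} (b : ι → ℂ) (e : ι → ℤ)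
    (h0 : (0 : ℂ) ∉ S)
    (h : ∀ z ∈ S, Summable (fun i => ‖b i * z ^ e i‖) ∧ HasSum (fun i => b i * z ^ e i) (f z)) :
    LaurentOn S (fun k => ∑' i : {i // e i = k}, b i) f := by
  intro z hz
  have hz0 : z ≠ 0 := fun h => h0 (h ▸ hz)
  obtain ⟨h1, h2⟩ := h z hz
  let E := Equiv.sigmaFiberEquiv e
  have h1' : Summable (fun p : (Σ k, {i // e i = k}) => ‖b p.2 * z ^ e p.2‖) :=
    (E.summable_iff (f := fun i => ‖b i * z ^ e i‖)).mpr h1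
  have h2' : HasSum (fun p : (Σ k, {i // e i = k}) => b p.2 * z ^ e p.2) (f z) :=
    (E.hasSum_iff (f := fun i => b i * z ^ e i)).mpr h2
  have hfib : ∀ k, (∑' i : {i // e i = k}, b i) * z ^ k =
      ∑' i : {i // e i = k}, b i * z ^ e i := by
    intro k
    rw [← tsum_mul_right]
    exact tsum_congr fun i => by rw [i.2]
  constructor
  · refine Summable.of_nonneg_of_le (fun _ => norm_nonneg _) (fun k => ?_) h1'.sigma
    rw [hfib]
    exact norm_tsum_le_tsum_norm (h1'.sigma_factor k)
  · simp_rw [hfib]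
    exact h2'.sigma fun k => (h1'.sigma_factor k).of_norm.hasSum

theorem LaurentOn.mul {S : Set ℂ} {f g : ℂ → ℂ} {c d : ℤ → ℂ} (h0 : (0 : ℂ) ∉ S)
    (hf : LaurentOn S c f) (hg : LaurentOn S d g) :
    ∃ a, LaurentOn S a (fun z => f z * g z) := by
  have key : ∀ z ∈ S,
      Summable (fun p : ℤ × ℤ => ‖c p.1 * d p.2 * z ^ (p.1 + p.2)‖) ∧
      HasSum (fun p : ℤ × ℤ => c p.1 * d p.2 * z ^ (p.1 + p.2)) (f z * g z) := by
    intro z hz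
    have hz0 : z ≠ 0 := fun h => h0 (h ▸ hz)
    have e : ∀ p : ℤ × ℤ,
        c p.1 * d p.2 * z ^ (p.1 + p.2) = (c p.1 * z ^ p.1) * (d p.2 * z ^ p.2) := by
      intro p; rw [zpow_add₀ hz0]; ring
    simp_rw [e]
    have hs := (hf z hz).1.mul_norm (hg z hz).1
    have hs' : Summable (fun p : ℤ × ℤ => (c p.1 * z ^ p.1) * (d p.2 * z ^ p.2)) :=
      Summable.of_norm hs
    refine ⟨hs, ?_⟩
    have h1 := (hf z hz).2
    have h2 := (hg z hz).2
    have := tsum_mul_tsum_of_summable_norm (hf z hz).1 (hg z hz).1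
    rw [← h1.tsum_eq, ← h2.tsum_eq, this]
    exact hs'.hasSum
  have := LaurentOn.of_family (f := fun z => f z * g z) (fun p : ℤ × ℤ => c p.1 * d p.2)
    (fun p => p.1 + p.2) h0 key
  exact ⟨_, this⟩

/-! ### The `q`-Pochhammer symbol -/

theorem LaurentOn.mono {S S' : Set ℂ} {c : ℤ → ℂ} {f : ℂ → ℂ} (hS : S' ⊆ S)
    (h : LaurentOn S c f) : LaurentOn S' c f := fun z hz => h z (hS hz)

theorem qp_summable (a : ℂ) {q : ℂ} (hq : ‖q‖ < 1) : Summable (fun k : ℕ => ‖-(a * q ^ k)‖) := by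
  simp only [norm_neg, norm_mul, norm_pow]
  exact (summable_geometric_of_lt_one (norm_nonneg _) hq).mul_left _

theorem qp_multipliable (a : ℂ) {q : ℂ} (hq : ‖q‖ < 1) :
    Multipliable (fun k : ℕ => 1 - a * q ^ k) := by
  simpa only [← sub_eq_add_neg] using multipliable_one_add_of_summable (qp_summable a hq)

theorem qp_tendsto (a : ℂ) {q : ℂ} (hq : ‖q‖ < 1) :
    Tendsto (fun n => ∏ k ∈ Finset.range n, (1 - a * q ^ k)) atTop (𝓝 (qPochInf a q)) :=
  (qp_multipliable a hq).hasProd.tendsto_prod_nat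

theorem qp_succ (a : ℂ) {q : ℂ} (hq : ‖q‖ < 1) :
    qPochInf a q = (1 - a) * qPochInf (a * q) q := by
  have h1 := (qp_tendsto a hq).comp (tendsto_add_atTop_nat 1)
  have h2 := (qp_tendsto (a * q) hq).const_mul (1 - a)
  refine tendsto_nhds_unique h1 (h2.congr fun n => ?_)
  simp only [Function.comp, Finset.prod_range_succ', pow_zero, mul_one]
  rw [mul_comm]
  congr 1
  exact Finset.prod_congr rfl fun k _ => by ring

theorem qp_ne_zero {a q : ℂ} (hq : ‖q‖ < 1) (h : ∀ k : ℕ, a * q ^ k ≠ 1) : qPochInf a q ≠ 0 := by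
  have := tprod_one_add_ne_zero_of_summable (f := fun k : ℕ => -(a * q ^ k))
    (fun k => by
      rw [← sub_eq_add_neg, sub_ne_zero]
      exact (h k).symm) (qp_summable a hq)
  unfold qPochInf
  simpa only [← sub_eq_add_neg] using this

theorem qp_ne_zero' {a q : ℂ} (hq : ‖q‖ < 1) (ha : ‖a‖ < 1) : qPochInf a q ≠ 0 := by
  refine qp_ne_zero hq fun k h => ?_
  have h1 : ‖a * q ^ k‖ < 1 := by
    rw [norm_mul, norm_pow]
    calc _ ≤ ‖a‖ * 1 := by
          gcongr
          exact pow_le_one₀ (norm_nonneg _) hq.le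
      _ < 1 := by simpa using ha
  rw [h] at h1
  simp at h1

/-- Splitting a Pochhammer symbol along residue classes of the exponent. -/
theorem qp_split (a : ℂ) {q : ℂ} (hq : ‖q‖ < 1) {d : ℕ} (hd : d ≠ 0) :
    qPochInf a q = ∏ r ∈ Finset.range d, qPochInf (a * q ^ r) (q ^ d) := by
  have hqd : ‖q ^ d‖ < 1 := by
    rw [norm_pow]; exact pow_lt_one₀ (norm_nonneg _) hq hd
  have h1 := (qp_tendsto a hq).comp (tendsto_id.const_mul_atTop' (Nat.pos_of_ne_zero hd))
  have h2 := tendsto_finsetProd (Finset.range d) fun r _ => qp_tendsto (a * q ^ r) hqd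
  refine tendsto_nhds_unique h1 (h2.congr fun n => ?_)
  simp only [Function.comp, id]
  rw [Finset.prod_comm]
  induction n with
  | zero => simp
  | succ n ih =>
    rw [Finset.prod_range_succ, ih, mul_add, mul_one, Finset.prod_range_add]
    congr 1
    exact Finset.prod_congr rfl fun k _ => by ring

theorem qp_sq (a : ℂ) {q : ℂ} (hq : ‖q‖ < 1) :
    qPochInf a q * qPochInf (-a) q = qPochInf (a ^ 2) (q ^ 2) := by
  have hq2 : ‖q ^ 2‖ < 1 := by
    rw [norm_pow]; exact pow_lt_one₀ (norm_nonneg _) hq two_ne_zero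
  refine tendsto_nhds_unique ((qp_tendsto a hq).mul (qp_tendsto (-a) hq))
    ((qp_tendsto (a ^ 2) hq2).congr fun n => ?_)
  rw [← Finset.prod_mul_distrib]
  exact Finset.prod_congr rfl fun k _ => by ring

/-- The product `(a z^e; q)_∞` has a Laurent expansion on `ℂ ∖ {0}`: multiply it out into a sum over
finite sets of factors. -/
theorem laurent_qp (a : ℂ) (e : ℤ) {q : ℂ} (hq : ‖q‖ < 1) :
    ∃ c, LaurentOn {0}ᶜ c (fun z => qPochInf (a * z ^ e) q) := by
  have key : ∀ z ∈ ({0}ᶜ : Set ℂ),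
      Summable (fun s : Finset ℕ => ‖(∏ k ∈ s, -(a * q ^ k)) * z ^ (e * s.card)‖) ∧
      HasSum (fun s : Finset ℕ => (∏ k ∈ s, -(a * q ^ k)) * z ^ (e * s.card))
        (qPochInf (a * z ^ e) q) := by
    intro z hz
    have h1 := qp_summable (a * z ^ e) hq
    have h2 : ∀ s : Finset ℕ, (∏ k ∈ s, -(a * q ^ k)) * z ^ (e * s.card) =
        ∏ k ∈ s, -(a * z ^ e * q ^ k) := by
      intro s
      rw [zpow_mul, zpow_natCast, ← Finset.prod_const, ← Finset.prod_mul_distrib]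
      exact Finset.prod_congr rfl fun k _ => by ring
    simp_rw [h2]
    have h3 := summable_finsetProd_of_summable_nonneg (fun _ => norm_nonneg _) h1
    refine ⟨by simpa only [norm_prod] using h3, ?_⟩
    have h4 := summable_finsetProd_of_summable_norm h1
    have h5 := tprod_one_add h4
    simp only [← sub_eq_add_neg] at h5
    rw [qPochInf, h5]
    exact h4.hasSum
  exact ⟨_, LaurentOn.of_family _ _ (by simp) key⟩

theorem tri_succ (k : ℤ) : (k + 1) * k / 2 = k * (k - 1) / 2 + k := by
  have : (k + 1) * k = k * (k - 1) + k * 2 := by ring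
  rw [this, Int.add_mul_ediv_right _ _ (by norm_num)]

/-- A first order recurrence with the multiplier of the theta function. -/
theorem theta_rec {q : ℂ} (hq0 : q ≠ 0) {c : ℤ → ℂ} (h : ∀ k, q ^ k * c k + c (k + 1) = 0) (k : ℤ) :
    c k = c 0 * ((-1) ^ k * q ^ (k * (k - 1) / 2)) := by
  have hs : ∀ k : ℤ, ((-1 : ℂ) ^ (k + 1) * q ^ ((k + 1) * (k + 1 - 1) / 2)) =
      - q ^ k * ((-1) ^ k * q ^ (k * (k - 1) / 2)) := by
    intro k
    rw [add_sub_cancel_right, tri_succ, zpow_add₀ hq0, zpow_add₀ (by norm_num)]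
    simp; ring
  induction k using Int.induction_on with
  | zero => simp
  | succ k ih =>
    rw [hs, eq_neg_of_add_eq_zero_right (h k), ih]
    ring
  | pred k ih =>
    have h1 := h (-k - 1)
    have h2 := hs (-k - 1)
    rw [sub_add_cancel] at h1 h2
    rw [h2] at ih
    rw [ih] at h1
    have h3 : q ^ (-(k:ℤ) - 1) ≠ 0 := zpow_ne_zero _ hq0
    apply mul_left_cancel₀ h3
    linear_combination h1

/-- The triple product up to a constant: `P(z) = -z P(zq)` is a first order recurrence for the Laurent
coefficients of the product `P`. -/
theorem jtp_const {q : ℂ} (hq : ‖q‖ < 1) (hq0 : q ≠ 0) :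
    ∃ C : ℂ, LaurentOn {0}ᶜ (fun k => C * ((-1) ^ k * q ^ (k * (k - 1) / 2)))
      (fun z => qPochInf z q * qPochInf (q / z) q * qPochInf q q) := by
  obtain ⟨c1, h1⟩ := laurent_qp 1 1 hq
  obtain ⟨c2, h2⟩ := laurent_qp q (-1) hq
  obtain ⟨c3, h3⟩ := h1.mul (by simp) h2
  simp only [one_mul, zpow_one, zpow_neg, ← div_eq_mul_inv] at h3
  have h4 : LaurentOn {0}ᶜ (fun k => c3 k * qPochInf q q)
      (fun z => qPochInf z q * qPochInf (q / z) q * qPochInf q q) := by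
    intro z hz
    have h := h3 z hz
    have e : ∀ k, c3 k * qPochInf q q * z ^ k = c3 k * z ^ k * qPochInf q q := fun k => by ring
    simp_rw [e]
    refine ⟨?_, h.2.mul_right _⟩
    simp_rw [norm_mul _ (qPochInf q q)]
    exact h.1.mul_right _
  set c := fun k => c3 k * qPochInf q q with hc
  set P := (fun z => qPochInf z q * qPochInf (q / z) q * qPochInf q q) with hP
  have hrec : ∀ k, q ^ k * c k + c (k + 1) = 0 := by
    have hPz : ∀ z ≠ 0, P z = - z * P (z * q) := by
      intro z hz
      have e1 := qp_succ z hq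
      have e2 := qp_succ (q / (z * q)) hq
      have e3 : q / (z * q) * q = q / z := by field_simp
      have e4 : q / (z * q) = 1 / z := by field_simp
      simp only [hP]
      rw [e1, e2, e3, e4]
      field_simp
      ring
    have h5 : LaurentOn {0}ᶜ (fun k => - (q ^ (k - 1) * c (k - 1))) P := by
      intro z hz
      have hz0 : z ≠ 0 := hz
      have hh := h4 (z * q) (by simp [hz0, hq0])
      have e : ∀ k, -(q ^ (k - 1) * c (k - 1)) * z ^ k =
          - z * (c (Equiv.subRight 1 k) * (z * q) ^ (Equiv.subRight 1 k)) := by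
        intro k
        simp only [Equiv.subRight_apply, mul_zpow, zpow_sub_one₀ hz0]
        field_simp
      simp_rw [e]
      rw [hPz z hz0]
      constructor
      · simp_rw [norm_mul (-z)]
        exact Summable.mul_left _ ((Equiv.subRight (1:ℤ)).summable_iff
          (f := fun k => ‖c k * (z * q) ^ k‖) |>.mpr hh.1)
      · exact HasSum.mul_left _ ((Equiv.subRight (1:ℤ)).hasSum_iff
          (f := fun k => c k * (z * q) ^ k) |>.mpr hh.2)
    have h6 := LaurentOn.unique one_pos (fun z hz => by
      rintro rfl; simp at hz) h4 h5
    intro k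
    have := congrFun h6 (k + 1)
    simp only [add_sub_cancel_right] at this
    rw [this]; ring
  refine ⟨c 0, ?_⟩
  have : c = fun k => c 0 * ((-1) ^ k * q ^ (k * (k - 1) / 2)) := funext fun k => theta_rec hq0 hrec k
  rw [← this]
  exact h4

/-! ### The pentagonal number theorem and the Jacobi triple product -/

theorem pent_summable {x : ℂ} (hx : ‖x‖ < 1) (e : ℕ → ℕ) (he : ∀ k, k ≤ e k) :
    Summable fun k : ℕ => ‖(-1 : ℂ) ^ k * x ^ e k‖ := by
  refine Summable.of_nonneg_of_le (fun _ => norm_nonneg _) (fun k => ?_)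
    (summable_geometric_of_lt_one (norm_nonneg x) hx)
  simp only [norm_mul, norm_pow, norm_neg, norm_one, one_pow, one_mul]
  exact pow_le_pow_of_le_one (norm_nonneg _) hx.le (he k)

/-- Euler's pentagonal number theorem for a complex number in the unit disc. -/
theorem pentagonal_complex {x : ℂ} (hx : ‖x‖ < 1) :
    HasSum (fun k : ℤ => (-1 : ℂ) ^ k * x ^ pentagonal k) (∏' n : ℕ, (1 - x ^ (n + 1))) := by
  have hg := summable_geometric_of_lt_one (norm_nonneg x) hx
  set C : ℝ := Real.exp (∑' n : ℕ, ‖x‖ ^ n) with hC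
  have hprod : ∀ k n : ℕ, ‖∏ i ∈ Finset.range (n + 1), (1 - x ^ (k + i + 1))‖ ≤ C := by
    intro k n
    calc ‖∏ i ∈ Finset.range (n + 1), (1 - x ^ (k + i + 1))‖
        = ∏ i ∈ Finset.range (n + 1), ‖1 - x ^ (k + i + 1)‖ := norm_prod _ _
      _ ≤ ∏ i ∈ Finset.range (n + 1), Real.exp (‖x‖ ^ i) := by
          refine Finset.prod_le_prod (fun _ _ => norm_nonneg _) fun i _ => ?_
          calc ‖1 - x ^ (k + i + 1)‖ ≤ ‖(1:ℂ)‖ + ‖x ^ (k + i + 1)‖ := norm_sub_le _ _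
            _ ≤ ‖x‖ ^ i + 1 := by
              rw [norm_one, norm_pow, add_comm]
              gcongr ?_ + 1
              exact pow_le_pow_of_le_one (norm_nonneg _) hx.le (by omega)
            _ ≤ _ := Real.add_one_le_exp _
      _ = Real.exp (∑ i ∈ Finset.range (n + 1), ‖x‖ ^ i) := (Real.exp_sum _ _).symm
      _ ≤ C := by
          rw [hC]
          gcongr
          exact hg.sum_le_tsum _ fun _ _ => by positivity
  have hterm : ∀ k n : ℕ, ‖x ^ ((k + 1) * n) * ∏ i ∈ Finset.range (n + 1), (1 - x ^ (k + i + 1))‖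
      ≤ ‖x‖ ^ n * C := by
    intro k n
    rw [norm_mul, norm_pow]
    refine mul_le_mul (pow_le_pow_of_le_one (norm_nonneg _) hx.le ?_) (hprod k n)
      (norm_nonneg _) (by positivity)
    exact Nat.le_mul_of_pos_left n (Nat.succ_pos k)
  have hsum : ∀ k : ℕ, Summable
      (fun n => x ^ ((k + 1) * n) * ∏ i ∈ Finset.range (n + 1), (1 - x ^ (k + i + 1))) :=
    fun k => Summable.of_norm_bounded (hg.mul_right C) (hterm k)
  have hs1 := pent_summable hx (fun k => pentagonal (-k)) (fun k => by
    have := two_mul_natCast_pentagonal_neg k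
    zify; nlinarith)
  have hs2 := pent_summable hx (fun k => pentagonal (k + 1)) (fun k => by
    have := two_mul_natCast_pentagonal (k + 1)
    zify; nlinarith)
  have key := Pentagonal.tprod_one_sub_pow (x := x)
    (tendsto_pow_atTop_nhds_zero_of_norm_lt_one hx) hsum ?_ ?_ ?_
  · have hs1' := hs1.of_norm
    have hs2' := hs2.of_norm
    rw [key]
    simp_rw [mul_sub]
    rw [hs1'.tsum_sub hs2', sub_eq_add_neg, ← tsum_neg]
    set g : ℤ → ℂ := fun k => (-1 : ℂ) ^ k * x ^ pentagonal (-k) with hg'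
    have g1 : (fun n : ℕ => g n) = fun k : ℕ => (-1 : ℂ) ^ k * x ^ pentagonal (-k) := by
      funext k; simp [g]
    have g2 : (fun n : ℕ => g (-(n + 1 : ℤ))) =
        fun k : ℕ => -((-1 : ℂ) ^ k * x ^ pentagonal (k + 1)) := by
      funext k
      have : ((-1 : ℂ)) ^ (-(k + 1 : ℤ)) = -(-1) ^ k := by
        rw [zpow_neg, ← Nat.cast_succ, zpow_natCast, pow_succ]
        rcases neg_one_pow_eq_or ℂ k with h | h <;> simp [h]
      simp only [g, this, neg_neg]
      ring
    have h1 : HasSum g ((∑' k : ℕ, (-1 : ℂ) ^ k * x ^ pentagonal (-k)) +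
        ∑' k : ℕ, -((-1 : ℂ) ^ k * x ^ pentagonal (k + 1))) := by
      refine HasSum.of_nat_of_neg_add_one (f := g) ?_ ?_
      · rw [g1]; exact hs1'.hasSum
      · rw [g2]; exact hs2'.neg.hasSum
    have h2 := (Equiv.neg ℤ).hasSum_iff.mpr h1
    have g3 : g ∘ (Equiv.neg ℤ) = fun k : ℤ => (-1 : ℂ) ^ k * x ^ pentagonal k := by
      funext k
      have : ((-1 : ℂ)) ^ (-k) = (-1) ^ k := by
        rw [zpow_neg, ← inv_zpow]; norm_num
      simp [g, this]
    rw [g3] at h2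
    exact h2
  · intro k
    have := qp_multipliable (x ^ (k + 1)) hx
    refine this.congr fun n => ?_
    ring
  · simp_rw [mul_sub]
    exact hs1.of_norm.sub hs2.of_norm
  · have hz := (tendsto_pow_atTop_nhds_zero_of_lt_one (norm_nonneg x) hx).mul_const
      (∑' n : ℕ, ‖x‖ ^ n * C)
    rw [zero_mul] at hz
    refine squeeze_zero_norm (fun k => ?_) hz
    rw [norm_mul, norm_mul, norm_pow, norm_pow, norm_neg, norm_one, one_pow, one_mul]
    refine mul_le_mul ?_ ?_ (norm_nonneg _) (by positivity)
    · refine pow_le_pow_of_le_one (norm_nonneg _) hx.le ?_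
      rw [Nat.le_div_iff_mul_le (by norm_num)]
      nlinarith
    · exact tsum_of_norm_bounded (hg.mul_right C).hasSum (hterm k)

theorem qp_self_eq (x : ℂ) : qPochInf x x = ∏' n : ℕ, (1 - x ^ (n + 1)) := by
  unfold qPochInf
  refine tprod_congr fun n => ?_
  ring

/-- The Jacobi triple product. -/
theorem jtp {q : ℂ} (hq : ‖q‖ < 1) (hq0 : q ≠ 0) :
    LaurentOn {0}ᶜ (fun k => (-1) ^ k * q ^ (k * (k - 1) / 2))
      (fun z => qPochInf z q * qPochInf (q / z) q * qPochInf q q) := by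
  obtain ⟨C, hC⟩ := jtp_const hq hq0
  suffices C = 1 by simpa [this] using hC
  -- At `q = x³`, `z = x` the product is `(x;x)_∞` and the series is the pentagonal one.
  obtain ⟨x, hx⟩ := IsAlgClosed.exists_pow_nat_eq q (n := 3) (by norm_num)
  have hx0 : x ≠ 0 := by rintro rfl; simp at hx; exact hq0 hx.symm
  have hx1 : ‖x‖ < 1 := by
    rw [← hx, norm_pow] at hq
    exact lt_of_pow_lt_pow_left₀ 3 zero_le_one (by simpa using hq)
  have h1 := (hC x hx0).2
  have h2 := pentagonal_complex hx1
  rw [← qp_self_eq, qp_split x hx1 (d := 3) (by norm_num)] at h2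
  have h3 : q / x = x * x := by rw [← hx]; field_simp
  have h4 : ∏ r ∈ Finset.range 3, qPochInf (x * x ^ r) (x ^ 3) =
      qPochInf x q * qPochInf (q / x) q * qPochInf q q := by
    simp only [Finset.prod_range_succ, Finset.prod_range_zero, one_mul, pow_zero, mul_one, pow_one,
      hx, h3]
    congr 2
    rw [← hx]; ring
  rw [h4] at h2
  have h5 : qPochInf x q * qPochInf (q / x) q * qPochInf q q ≠ 0 := by
    refine mul_ne_zero (mul_ne_zero ?_ ?_) ?_ <;> refine qp_ne_zero' hq ?_
    · exact hx1
    · rw [h3, norm_mul]; nlinarith [norm_nonneg x]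
    · exact hq
  have h6 := (h2.mul_left C)
  have h7 : ∀ k : ℤ, C * ((-1) ^ k * x ^ pentagonal k) =
      C * ((-1) ^ k * q ^ (k * (k - 1) / 2)) * x ^ k := by
    intro k
    rw [← hx, mul_assoc, mul_assoc, ← zpow_natCast x 3, ← zpow_mul, ← zpow_add₀ hx0,
      ← zpow_natCast]
    congr 3
    have e1 := two_mul_natCast_pentagonal k
    have e2 : 2 * (k * (k - 1) / 2) = k * (k - 1) :=
      Int.two_mul_ediv_two_of_even (by grind)
    push_cast
    linarith
  simp_rw [h7] at h6
  have h8 := h6.unique h1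
  exact (mul_eq_right₀ h5).mp h8

/-! ### The rank generating function as a sum over the largest part -/

/-- Multisets of positive integers that are at most `m`. -/
abbrev PartsLe (m : ℕ) : Type := {s : Multiset ℕ // ∀ i ∈ s, 0 < i ∧ i ≤ m}

/-- Finite multisets of positive integers, that is, partitions of arbitrary size. -/
abbrev AllParts : Type := {s : Multiset ℕ // ∀ i ∈ s, 0 < i}

/-- Separating the parts equal to `m + 1`. -/
def partsLeSucc (m : ℕ) : PartsLe (m + 1) ≃ ℕ × PartsLe m where
  toFun s := (s.1.count (m + 1), ⟨s.1.filter (fun i => i ≠ m + 1), fun i hi => by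
    rw [Multiset.mem_filter] at hi
    have := s.2 i hi.1
    omega⟩)
  invFun p := ⟨Multiset.replicate p.1 (m + 1) + p.2.1, fun i hi => by
    rw [Multiset.mem_add] at hi
    rcases hi with hi | hi
    · rw [Multiset.eq_of_mem_replicate hi]; omega
    · have := p.2.2 i hi; omega⟩
  left_inv s := by
    apply Subtype.ext
    simp only
    rw [← Multiset.filter_eq']
    exact Multiset.filter_add_not (fun i => i = m + 1) s.1
  right_inv p := by
    have h : m + 1 ∉ p.2.1 := fun h => by have := p.2.2 _ h; omega
    refine Prod.ext ?_ (Subtype.ext ?_)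
    · simp [Multiset.count_eq_zero_of_notMem h]
    · simp only [Multiset.filter_add]
      rw [Multiset.filter_eq_nil.mpr, zero_add, Multiset.filter_eq_self]
      · rintro i hi rfl; exact h hi
      · intro i hi; simpa using Multiset.eq_of_mem_replicate hi

theorem multiset_sup_mem (s : Multiset ℕ) (h : s ≠ 0) : s.sup ∈ s := by
  induction s using Multiset.induction with
  | empty => exact absurd rfl h
  | cons a s ih =>
    rw [Multiset.sup_cons]
    by_cases hs : s = 0
    · subst hs; simp
    · rcases le_total a s.sup with h1 | h1
      · rw [sup_eq_right.mpr h1]; exact Multiset.mem_cons_of_mem (ih hs)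
      · rw [sup_eq_left.mpr h1]; exact Multiset.mem_cons_self _ _

theorem partsSigma_ext {a b : ℕ} {x : PartsLe (a + 1)} {y : PartsLe (b + 1)} (h : a = b)
    (hxy : x.1 = y.1) : (⟨a, x⟩ : Σ m : ℕ, PartsLe (m + 1)) = ⟨b, y⟩ := by
  subst h
  rw [Subtype.ext hxy]

/-- Removing one copy of the largest part `m + 1`; the index `none` is the empty partition. -/
def allPartsEquiv : AllParts ≃ Option (Σ m : ℕ, PartsLe (m + 1)) where
  toFun s := if h : s.1 = 0 then none else
    some ⟨s.1.sup - 1, ⟨s.1.erase s.1.sup, fun i hi => by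
      have h1 := Multiset.mem_of_mem_erase hi
      have h2 := s.2 i h1
      have h3 : i ≤ s.1.sup := Multiset.le_sup h1
      omega⟩⟩
  invFun o := match o with
    | none => ⟨0, by simp⟩
    | some ⟨m, s⟩ => ⟨(m + 1) ::ₘ s.1, fun i hi => by
        rcases Multiset.mem_cons.mp hi with rfl | hi
        · omega
        · exact (s.2 i hi).1⟩
  left_inv s := by
    by_cases h : s.1 = 0
    · simp only [h, dif_pos]; exact Subtype.ext h.symm
    · simp only [h, dif_neg, not_false_eq_true]
      apply Subtype.ext
      have hm : s.1.sup ∈ s.1 := by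
        exact multiset_sup_mem s.1 h
      have := s.2 _ hm
      simp only
      rw [Nat.sub_add_cancel this, Multiset.cons_erase hm]
  right_inv o := by
    match o with
    | none => simp
    | some ⟨m, s⟩ =>
      have hs : ((m + 1) ::ₘ s.1).sup = m + 1 := by
        rw [Multiset.sup_cons]
        exact sup_eq_left.mpr (Multiset.sup_le.mpr fun i hi => (s.2 i hi).2)
      have hne : ((m + 1) ::ₘ s.1) ≠ 0 := Multiset.cons_ne_zero
      simp only [hne, dif_neg, not_false_eq_true]
      congr 1
      refine partsSigma_ext (by simp [hs]) ?_
      simp [hs]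

/-- Partitions of `n`, for all `n` together. -/
def allPartsSigma : (Σ n : ℕ, n.Partition) ≃ AllParts where
  toFun p := ⟨p.2.parts, fun _ hi => p.2.parts_pos hi⟩
  invFun s := ⟨s.1.sum, ⟨s.1, fun {i} hi => s.2 i hi, rfl⟩⟩
  left_inv p := by
    obtain ⟨n, ⟨s, hs, h⟩⟩ := p
    subst h
    rfl
  right_inv s := rfl

/-- The complex family `f` is absolutely summable with sum `v`. -/
def AbsSum {ι : Type*} (f : ι → ℂ) (v : ℂ) : Prop := Summable (fun i => ‖f i‖) ∧ HasSum f v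

theorem AbsSum.equiv {ι κ : Type*} (e : ι ≃ κ) {f : ι → ℂ} {g : κ → ℂ} {v : ℂ}
    (h : ∀ i, f i = g (e i)) (hg : AbsSum g v) : AbsSum f v := by
  have : f = g ∘ e := funext h
  subst this
  exact ⟨(e.summable_iff (f := fun k => ‖g k‖)).mpr hg.1, (e.hasSum_iff (f := g)).mpr hg.2⟩

theorem AbsSum.of_summable {ι : Type*} {f : ι → ℂ} (h : Summable (fun i => ‖f i‖)) :
    AbsSum f (∑' i, f i) := by
  have hs : Summable f := Summable.of_norm h
  exact ⟨h, hs.hasSum⟩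

theorem AbsSum.mul {ι κ : Type*} {f : ι → ℂ} {g : κ → ℂ} {v w : ℂ} (hf : AbsSum f v)
    (hg : AbsSum g w) : AbsSum (fun p : ι × κ => f p.1 * g p.2) (v * w) := by
  have h1 : Summable (fun p : ι × κ => ‖f p.1 * g p.2‖) := by
    have := hf.1.mul_of_nonneg hg.1 (fun _ => norm_nonneg _) (fun _ => norm_nonneg _)
    simpa only [norm_mul] using this
  have h2 := tsum_mul_tsum_of_summable_norm hf.1 hg.1
  rw [hf.2.tsum_eq, hg.2.tsum_eq] at h2
  rw [h2]
  exact AbsSum.of_summable h1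

theorem AbsSum.const_mul {ι : Type*} {f : ι → ℂ} {v : ℂ} (c : ℂ) (hf : AbsSum f v) :
    AbsSum (fun i => c * f i) (c * v) := by
  refine ⟨?_, hf.2.mul_left c⟩
  simpa only [norm_mul] using hf.1.mul_left ‖c‖

theorem AbsSum.add {ι : Type*} {f g : ι → ℂ} {v w : ℂ} (hf : AbsSum f v) (hg : AbsSum g w) :
    AbsSum (fun i => f i + g i) (v + w) :=
  ⟨Summable.of_nonneg_of_le (fun _ => norm_nonneg _) (fun _ => norm_add_le _ _) (hf.1.add hg.1),
    hf.2.add hg.2⟩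

theorem AbsSum.unique {ι : Type*} {f : ι → ℂ} {v w : ℂ} (hf : AbsSum f v) (hg : AbsSum f w) :
    v = w := hf.2.unique hg.2

/-- Adjoining one index. -/
theorem AbsSum.option {ι : Type*} {f : Option ι → ℂ} {v : ℂ}
    (h : AbsSum (fun i => f (some i)) v) : AbsSum f (f none + v) := by
  refine AbsSum.equiv (Equiv.optionEquivSumPUnit.{0} ι) (g := Sum.elim (fun i => f (some i))
    (fun _ => f none)) (by rintro (_ | _) <;> rfl) ?_
  refine ⟨?_, ?_⟩
  · exact Summable.sum _ h.1 (hasSum_unique _).summable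
  · rw [add_comm]
    exact HasSum.sum h.2 (hasSum_unique (fun _ : PUnit.{1} => f none))

/-- Summation over fibres. -/
theorem AbsSum.sigma {ι : Type*} {κ : ι → Type*} {f : (Σ i, κ i) → ℂ} {v : ℂ} {w : ι → ℂ}
    (h : AbsSum f v) (hw : ∀ i, HasSum (fun k => f ⟨i, k⟩) (w i)) : AbsSum w v := by
  refine ⟨?_, h.2.sigma hw⟩
  have h1 := (summable_sigma_of_nonneg (fun _ => norm_nonneg _)).mp h.1
  refine Summable.of_nonneg_of_le (fun _ => norm_nonneg _) (fun i => ?_) h1.2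
  rw [← (hw i).tsum_eq]
  exact norm_tsum_le_tsum_norm (h1.1 i)

/-- The generating function of partitions into parts at most `m`, where `w` counts the parts. -/
theorem partsLe_hasSum {w q : ℂ} (hq : ‖q‖ < 1) (hwq : ‖w * q‖ < 1) (m : ℕ) :
    AbsSum (fun s : PartsLe m => w ^ s.1.card * q ^ s.1.sum)
      (∏ i ∈ Finset.range m, (1 - w * q ^ (i + 1)))⁻¹ := by
  induction m with
  | zero =>
    have hu : ∀ s : PartsLe 0, s.1 = 0 := fun s => by
      refine Multiset.eq_zero_of_forall_notMem fun i hi => ?_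
      have := s.2 i hi
      omega
    have : Unique (PartsLe 0) := ⟨⟨⟨0, by simp⟩⟩, fun s => Subtype.ext ((hu s).trans rfl)⟩
    refine ⟨(hasSum_unique _).summable, ?_⟩
    have := hasSum_unique (fun s : PartsLe 0 => w ^ s.1.card * q ^ s.1.sum)
    simp only [hu default] at this
    simpa using this
  | succ m ih =>
    have hx : ‖w * q ^ (m + 1)‖ < 1 := by
      rw [pow_succ', ← mul_assoc, norm_mul, norm_pow]
      calc _ ≤ ‖w * q‖ * 1 := mul_le_mul_of_nonneg_left
            (pow_le_one₀ (norm_nonneg _) hq.le) (norm_nonneg _)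
        _ < 1 := by rwa [mul_one]
    have hg := summable_geometric_of_lt_one (norm_nonneg _) hx
    have hg' : AbsSum (fun k : ℕ => (w * q ^ (m + 1)) ^ k) (1 - w * q ^ (m + 1))⁻¹ :=
      ⟨by simpa only [norm_pow] using hg, hasSum_geometric_of_norm_lt_one hx⟩
    have hmul := hg'.mul ih
    have hv : (∏ i ∈ Finset.range (m + 1), (1 - w * q ^ (i + 1)))⁻¹ =
        (1 - w * q ^ (m + 1))⁻¹ * (∏ i ∈ Finset.range m, (1 - w * q ^ (i + 1)))⁻¹ := by
      rw [Finset.prod_range_succ, mul_inv]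
      exact mul_comm _ _
    rw [hv]
    refine AbsSum.equiv (partsLeSucc m) ?_ hmul
    intro s
    obtain ⟨p, rfl⟩ := (partsLeSucc m).symm.surjective s
    rw [Equiv.apply_symm_apply]
    simp only [partsLeSucc, Equiv.coe_fn_symm_mk, Multiset.card_add, Multiset.card_replicate,
        Multiset.sum_add, Multiset.sum_replicate, smul_eq_mul]
    rw [pow_add, pow_add, mul_pow, ← pow_mul, mul_comm (m + 1)]
    ring

theorem prod_inv_bounded {a r : ℝ} (hr0 : 0 ≤ r) (hr : r < 1) (ha0 : 0 ≤ a) (ha : a < 1) :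
    ∃ C : ℝ, ∀ m, ((∏ i ∈ Finset.range m, (1 - a * r ^ i))⁻¹) ≤ C := by
  have hr' : ‖(r : ℂ)‖ < 1 := by simpa [abs_of_nonneg hr0] using hr
  have ha' : ‖(a : ℂ)‖ < 1 := by simpa [abs_of_nonneg ha0] using ha
  have h1 := ((qp_tendsto (a : ℂ) hr').inv₀ (qp_ne_zero' hr' ha')).norm
  obtain ⟨C, hC⟩ := h1.bddAbove_range
  refine ⟨C, fun m => le_trans (le_abs_self _) (le_trans (le_of_eq ?_) (hC ⟨m, rfl⟩))⟩
  rw [← Real.norm_eq_abs, ← Complex.norm_real]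
  push_cast
  rfl

/-- For `|q| < |w| < |q|⁻¹` the rank generating function is an absolutely convergent sum over all
partitions, and, collecting those with largest part `m + 1`, a single sum over `m`. -/
theorem rank_family {w q : ℂ} (hq : ‖q‖ < 1) (hw : w ≠ 0) (hwq : ‖w * q‖ < 1)
    (hqw : ‖q / w‖ < 1) :
    AbsSum (fun s : AllParts => w ^ ((s.1.card : ℤ) - s.1.sup) * q ^ s.1.sum) (rankGF w⁻¹ q) ∧
    AbsSum (fun m : ℕ => w⁻¹ ^ m * q ^ (m + 1) *
      (∏ i ∈ Finset.range (m + 1), (1 - w * q ^ (i + 1)))⁻¹) (rankGF w⁻¹ q - 1) := by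
  set F : (Σ m : ℕ, PartsLe (m + 1)) → ℂ := fun p =>
    w⁻¹ ^ p.1 * q ^ (p.1 + 1) * (w ^ p.2.1.card * q ^ p.2.1.sum) with hF
  have hfib : ∀ m, AbsSum (fun s => F ⟨m, s⟩) (w⁻¹ ^ m * q ^ (m + 1) *
      (∏ i ∈ Finset.range (m + 1), (1 - w * q ^ (i + 1)))⁻¹) := by
    intro m
    have h := (partsLe_hasSum hq hwq (m + 1)).const_mul (w⁻¹ ^ m * q ^ (m + 1))
    simp only [hF]
    exact h
  have hFs : Summable (fun p => ‖F p‖) := by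
    refine (summable_sigma_of_nonneg (fun _ => norm_nonneg _)).mpr ⟨fun m => (hfib m).1, ?_⟩
    obtain ⟨C, hC⟩ := prod_inv_bounded (norm_nonneg q) hq (norm_nonneg (w * q)) hwq
    refine Summable.of_nonneg_of_le (fun _ => tsum_nonneg fun _ => norm_nonneg _) (fun m => ?_)
      ((summable_geometric_of_lt_one (norm_nonneg _) hqw).mul_right (‖q‖ * C))
    have hwq' : ‖((‖w‖ : ℝ) : ℂ) * ((‖q‖ : ℝ) : ℂ)‖ < 1 := by
      rw [norm_mul, Complex.norm_real, Complex.norm_real, norm_norm, norm_norm, ← norm_mul]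
      exact hwq
    have hq' : ‖((‖q‖ : ℝ) : ℂ)‖ < 1 := by rwa [Complex.norm_real, norm_norm]
    have h2 := (partsLe_hasSum hq' hwq' (m + 1)).2
    have h3 : HasSum (fun s : PartsLe (m + 1) => ‖w ^ s.1.card * q ^ s.1.sum‖)
        (∏ i ∈ Finset.range (m + 1), (1 - ‖w * q‖ * ‖q‖ ^ i))⁻¹ := by
      rw [← Complex.hasSum_ofReal]
      convert h2 using 1
      · funext s; simp
      · push_cast
        congr 1
        refine Finset.prod_congr rfl fun i _ => ?_
        rw [norm_mul, pow_succ']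
        push_cast
        ring
    have h4 : (fun s => ‖F ⟨m, s⟩‖) = fun s : PartsLe (m + 1) =>
        ‖w⁻¹ ^ m * q ^ (m + 1)‖ * ‖w ^ s.1.card * q ^ s.1.sum‖ := by
      funext s; simp only [hF]; rw [norm_mul]
    rw [h4, (h3.mul_left _).tsum_eq]
    have h5 : ‖w⁻¹ ^ m * q ^ (m + 1)‖ = ‖q / w‖ ^ m * ‖q‖ := by
      rw [← norm_pow, ← norm_mul]
      congr 1
      rw [div_pow, pow_succ, inv_pow]; field_simp
    rw [h5, mul_assoc]
    exact mul_le_mul_of_nonneg_left (mul_le_mul_of_nonneg_left (hC _) (norm_nonneg _))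
      (pow_nonneg (norm_nonneg _) _)
  have hFv := AbsSum.of_summable hFs
  have h1 := AbsSum.option (f := fun o : Option (Σ m : ℕ, PartsLe (m + 1)) =>
    match o with | none => 1 | some p => F p) hFv
  have h2 : AbsSum (fun s : AllParts => w ^ ((s.1.card : ℤ) - s.1.sup) * q ^ s.1.sum)
      (1 + ∑' p, F p) := by
    refine AbsSum.equiv allPartsEquiv ?_ h1
    intro s
    obtain ⟨o, rfl⟩ := allPartsEquiv.symm.surjective s
    rw [Equiv.apply_symm_apply]
    match o with
    | none => simp [allPartsEquiv]
    | some ⟨m, s⟩ =>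
      have hs : ((m + 1) ::ₘ s.1).sup = m + 1 := by
        rw [Multiset.sup_cons]
        exact sup_eq_left.mpr (Multiset.sup_le.mpr fun i hi => (s.2 i hi).2)
      simp only [allPartsEquiv, Equiv.coe_fn_symm_mk, hs, hF, Multiset.card_cons,
        Multiset.sum_cons]
      have h6 : (((s.1.card + 1 : ℕ) : ℤ) - ((m + 1 : ℕ) : ℤ)) = (s.1.card : ℤ) - (m : ℤ) := by
        push_cast; ring
      rw [h6, zpow_sub₀ hw, zpow_natCast, zpow_natCast, pow_add q (m + 1)]
      rw [inv_pow]; ring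
  have h3 : HasSum (fun n : ℕ => (∑ p : n.Partition, w⁻¹ ^ partitionRank p) * q ^ n)
      (1 + ∑' p, F p) := by
    have h7 : AbsSum (fun p : Σ n : ℕ, n.Partition => w⁻¹ ^ partitionRank p.2 * q ^ p.1)
        (1 + ∑' p, F p) := by
      refine AbsSum.equiv allPartsSigma ?_ h2
      rintro ⟨n, p⟩
      simp only [allPartsSigma, Equiv.coe_fn_mk, partitionRank, p.parts_sum]
      rw [inv_zpow', neg_sub]
    refine h7.2.sigma (fun n => ?_)
    have := hasSum_fintype (fun p : n.Partition => w⁻¹ ^ partitionRank p * q ^ n)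
    rwa [← Finset.sum_mul] at this
  have h4 : rankGF w⁻¹ q = 1 + ∑' p, F p := h3.tsum_eq
  rw [h4]
  refine ⟨h2, ?_⟩
  rw [add_sub_cancel_left]
  exact hFv.sigma fun m => (hfib m).2

/-! ### The `q`-difference equation of the rank generating function -/

/-- The `q`-difference equation of the rank generating function. With
`U = Σ_m w^{-m} / ((1 - wq) ⋯ (1 - wq^m))`, which converges for `|w| > 1`, both `R(w⁻¹;q)` and
`R((wq)⁻¹;q)` are affine functions of `U`; the equation eliminates `U`. -/
theorem rank_U {w q : ℂ} (hq : ‖q‖ < 1) (hw : 1 < ‖w‖) (hwq : ‖w * q‖ < 1) (hq0 : q ≠ 0) :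
    (w - 1) * rankGF (w * q)⁻¹ q =
      (1 - w * q) * ((w - 1) * (1 - q * w ^ 2) + q * w ^ 3 * rankGF w⁻¹ q) := by
  have hw0 : w ≠ 0 := by rintro rfl; norm_num at hw
  have hfac : ∀ i : ℕ, 1 - w * q ^ (i + 1) ≠ 0 := by
    intro i h
    have h1 : ‖w * q ^ (i + 1)‖ = 1 := by rw [← sub_eq_zero.mp h, norm_one]
    rw [pow_succ', ← mul_assoc, norm_mul, norm_pow] at h1
    have := mul_le_mul_of_nonneg_left (pow_le_one₀ (n := i) (norm_nonneg q) hq.le)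
      (norm_nonneg (w * q))
    rw [h1, mul_one] at this
    linarith
  set P : ℕ → ℂ := fun m => ∏ i ∈ Finset.range m, (1 - w * q ^ (i + 1)) with hP
  have hP0 : P 0 = 1 := by simp [hP]
  have hPs : ∀ m, P (m + 1) = P m * (1 - w * q ^ (m + 1)) := fun m => Finset.prod_range_succ _ _
  have hPne : ∀ m, P m ≠ 0 := fun m => Finset.prod_ne_zero_iff.mpr fun i _ => hfac i
  set u : ℕ → ℂ := fun m => w⁻¹ ^ m * (P m)⁻¹ with hu
  have hwi : ‖w⁻¹‖ < 1 := by rw [norm_inv]; exact inv_lt_one_of_one_lt₀ hw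
  have hus : Summable u := by
    obtain ⟨C, hC⟩ := prod_inv_bounded (norm_nonneg q) hq (norm_nonneg (w * q)) hwq
    refine Summable.of_norm_bounded
      ((summable_geometric_of_lt_one (norm_nonneg _) hwi).mul_right C) fun m => ?_
    simp only [hu, norm_mul, norm_pow]
    refine mul_le_mul_of_nonneg_left (le_trans ?_ (hC m)) (pow_nonneg (norm_nonneg _) _)
    rw [norm_inv]
    have hpos : ∀ i : ℕ, 0 < 1 - ‖w * q‖ * ‖q‖ ^ i := fun i => by
      have := mul_le_mul_of_nonneg_left (pow_le_one₀ (n := i) (norm_nonneg q) hq.le)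
        (norm_nonneg (w * q))
      rw [mul_one] at this
      linarith
    refine inv_anti₀ (Finset.prod_pos fun i _ => hpos i) ?_
    simp only [hP]
    rw [norm_prod]
    refine Finset.prod_le_prod (fun i _ => (hpos i).le) fun i _ => ?_
    have := norm_sub_norm_le (1 : ℂ) (w * q ^ (i + 1))
    rw [norm_one, pow_succ', ← mul_assoc, norm_mul, norm_pow] at this
    rwa [pow_succ', ← mul_assoc]
  set U := ∑' m, u m with hU
  have h0 : HasSum u U := hus.hasSum
  have h1 : HasSum (fun m => u (m + 1)) (U - 1) := by
    have := (hasSum_nat_add_iff' 1).mpr h0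
    simpa [hu, hP0] using this
  have h2 : HasSum (fun m => u (m + 2)) (U - 1 - w⁻¹ * (1 - w * q)⁻¹) := by
    have := (hasSum_nat_add_iff' 2).mpr h0
    simpa [hu, hP0, Finset.sum_range_succ, hPs, sub_sub] using this
  have hqw : ‖q / w‖ < 1 := by
    rw [div_eq_mul_inv, norm_mul]
    exact mul_lt_one_of_nonneg_of_lt_one_left (norm_nonneg _) hq hwi.le
  -- Telescoping: the `m`-th term of the rank series is `u (m + 1) - w⁻¹ u m`.
  have hR1 : rankGF w⁻¹ q = (1 - w⁻¹) * U := by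
    have h3 := (rank_family hq hw0 hwq hqw).2.2
    have h4 := h1.sub (h0.mul_left w⁻¹)
    have h5 : (fun m => u (m + 1) - w⁻¹ * u m) = fun m : ℕ => w⁻¹ ^ m * q ^ (m + 1) *
      (∏ i ∈ Finset.range (m + 1), (1 - w * q ^ (i + 1)))⁻¹ := by
      funext m
      change w⁻¹ ^ (m + 1) * (P (m + 1))⁻¹ - w⁻¹ * (w⁻¹ ^ m * (P m)⁻¹) =
        w⁻¹ ^ m * q ^ (m + 1) * (P (m + 1))⁻¹
      rw [hPs, pow_succ w⁻¹]
      have := hfac m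
      have := hPne m
      field_simp
      ring
    rw [h5] at h4
    have := h3.unique h4
    linear_combination this
  have hwq0 : w * q ≠ 0 := mul_ne_zero hw0 hq0
  -- The `m`-th term of the rank series at `w q` is a multiple of `u (m + 2)`.
  have hR2 : rankGF (w * q)⁻¹ q = (1 - w * q) * (1 - q * w ^ 2 + q * w ^ 2 * U) := by
    have h3 := (rank_family (w := w * q) hq hwq0 (by
      rw [norm_mul]; exact mul_lt_one_of_nonneg_of_lt_one_left (norm_nonneg _) hwq hq.le)
      (by rwa [div_mul_cancel_right₀ hq0])).2.2
    have h4 := h2.mul_left (q * (1 - w * q) * w ^ 2)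
    have hP' : ∀ m, ∏ i ∈ Finset.range m, (1 - w * q * q ^ (i + 1)) =
        P (m + 1) * (1 - w * q)⁻¹ := by
      intro m
      have h6 : (1 - w * q) ≠ 0 := by simpa using hfac 0
      simp only [hP]
      rw [Finset.prod_range_succ', zero_add, pow_one, mul_assoc, mul_inv_cancel₀ h6, mul_one]
      refine Finset.prod_congr rfl fun i _ => ?_
      ring
    have h5 : (fun m => q * (1 - w * q) * w ^ 2 * u (m + 2)) = fun m : ℕ =>
        (w * q)⁻¹ ^ m * q ^ (m + 1) *
      (∏ i ∈ Finset.range (m + 1), (1 - w * q * q ^ (i + 1)))⁻¹ := by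
      funext m
      rw [hP', mul_inv (P _), inv_inv]
      change q * (1 - w * q) * w ^ 2 * (w⁻¹ ^ (m + 2) * (P (m + 2))⁻¹) = _
      have := hPne (m + 1 + 1)
      rw [mul_inv w q, mul_pow, inv_pow, inv_pow, inv_pow]
      field_simp
      ring
    rw [h5] at h4
    have h6 := h3.unique h4
    have h7 : (1 - w * q) ≠ 0 := by simpa using hfac 0
    have h8 : (1 - w * q) * (1 - w * q)⁻¹ = 1 := mul_inv_cancel₀ h7
    have h9 : w * w⁻¹ = 1 := mul_inv_cancel₀ hw0
    linear_combination h6 - q * w * (w * w⁻¹) * h8 - q * w * h9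
  rw [hR1, hR2]
  field_simp

theorem LaurentOn.congr_fun {S : Set ℂ} {c : ℤ → ℂ} {f g : ℂ → ℂ} (hf : LaurentOn S c f)
    (h : ∀ z, g z = f z) : LaurentOn S c g := by
  have : g = f := funext h
  rwa [this]

theorem AbsSum.of_injective {ι κ : Type*} {e : ι → κ} {f : κ → ℂ} {v : ℂ}
    (he : Function.Injective e) (h : ∀ k ∉ Set.range e, f k = 0) :
    AbsSum (f ∘ e) v ↔ AbsSum f v := by
  have h' : ∀ k ∉ Set.range e, ‖f k‖ = 0 := fun k hk => by rw [h k hk, norm_zero]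
  exact and_congr (he.summable_iff (f := fun k => ‖f k‖) h') (he.hasSum_iff h)

theorem LaurentOn.add {S : Set ℂ} {c d : ℤ → ℂ} {f g : ℂ → ℂ} (hf : LaurentOn S c f)
    (hg : LaurentOn S d g) : LaurentOn S (fun k => c k + d k) (fun z => f z + g z) := by
  intro z hz
  have h : AbsSum (fun k => c k * z ^ k + d k * z ^ k) (f z + g z) :=
    AbsSum.add (hf z hz) (hg z hz)
  simp only [add_mul]
  exact h

theorem LaurentOn.const_mul {S : Set ℂ} {c : ℤ → ℂ} {f : ℂ → ℂ} (a : ℂ) (hf : LaurentOn S c f) :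
    LaurentOn S (fun k => a * c k) (fun z => a * f z) := by
  intro z hz
  have h : AbsSum (fun k => a * (c k * z ^ k)) (a * f z) := AbsSum.const_mul a (hf z hz)
  simp only [mul_assoc]
  exact h

theorem LaurentOn.shift {S : Set ℂ} {c : ℤ → ℂ} {f : ℂ → ℂ} (h0 : (0 : ℂ) ∉ S) (m : ℤ)
    (hf : LaurentOn S c f) : LaurentOn S (fun k => c (k - m)) (fun z => z ^ m * f z) := by
  intro z hz
  have hz0 : z ≠ 0 := fun h => h0 (h ▸ hz)
  have h : AbsSum (fun k => z ^ m * (c k * z ^ k)) (z ^ m * f z) :=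
    AbsSum.const_mul _ (hf z hz)
  refine AbsSum.equiv (Equiv.subRight m) (fun k => ?_) h
  simp only [Equiv.subRight_apply]
  rw [zpow_sub₀ hz0]
  have := zpow_ne_zero m hz0
  field_simp

theorem LaurentOn.dilate {S S' : Set ℂ} {c : ℤ → ℂ} {f : ℂ → ℂ} (q : ℂ)
    (hS : ∀ z ∈ S', z * q ∈ S) (hf : LaurentOn S c f) :
    LaurentOn S' (fun k => c k * q ^ k) (fun z => f (z * q)) := by
  intro z hz
  exact AbsSum.equiv (Equiv.refl ℤ) (fun k => by rw [Equiv.refl_apply, mul_zpow]; ring)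
    (hf _ (hS z hz))

theorem LaurentOn.sq {c : ℤ → ℂ} {f : ℂ → ℂ} (hf : LaurentOn {0}ᶜ c f) :
    LaurentOn {0}ᶜ (fun k => if 2 ∣ k then c (k / 2) else 0) (fun z => f (z ^ 2)) := by
  intro z hz
  have h := hf (z ^ 2) (by simpa using hz)
  have hinj : Function.Injective (fun k : ℤ => 2 * k) := fun a b h => by
    simpa using h
  have h1 : (fun k : ℤ => c k * (z ^ 2) ^ k) =
      (fun k : ℤ => (if 2 ∣ k then c (k / 2) else 0) * z ^ k) ∘ (fun k : ℤ => 2 * k) := by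
    funext k
    simp only [Function.comp, dvd_mul_right, if_true]
    rw [Int.mul_ediv_cancel_left _ two_ne_zero, zpow_mul]
    norm_cast
  have hoff : ∀ k ∉ Set.range (fun k : ℤ => 2 * k),
      (if (2 : ℤ) ∣ k then c (k / 2) else 0) * z ^ k = 0 := by
    intro k hk
    rw [if_neg, zero_mul]
    rintro ⟨j, rfl⟩
    exact hk ⟨j, rfl⟩
  have h : AbsSum (fun k : ℤ => c k * (z ^ 2) ^ k) (f (z ^ 2)) := h
  rw [h1] at h
  exact (AbsSum.of_injective hinj hoff).mp h

theorem laurent_one_add (S : Set ℂ) : ∃ c, LaurentOn S c (fun z => 1 + z) := by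
  refine ⟨fun k => if k = 0 ∨ k = 1 then 1 else 0, fun z _ => ?_⟩
  have hoff : ∀ k ∉ ({0, 1} : Finset ℤ),
      (if k = 0 ∨ k = 1 then (1 : ℂ) else 0) * z ^ k = 0 := by
    intro k hk
    rw [if_neg (by simpa using hk), zero_mul]
  refine ⟨summable_of_ne_finset_zero (s := {0, 1}) fun k hk => ?_, ?_⟩
  · rw [hoff k hk, norm_zero]
  · have : HasSum (fun k : ℤ => (if k = 0 ∨ k = 1 then (1 : ℂ) else 0) * z ^ k)
        (∑ k ∈ ({0, 1} : Finset ℤ), (if k = 0 ∨ k = 1 then (1 : ℂ) else 0) * z ^ k) :=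
      hasSum_sum_of_ne_finset_zero hoff
    simpa using this

/-- The modified rank generating function in the variable `w = z⁻¹`, up to a monomial factor:
`rankGFtilde z q = z * rankG q z⁻¹`. -/
noncomputable def rankG (q w : ℂ) : ℂ :=
  (1 + w) * qPochInf (w ^ 2 * q) q * qPochInf (w ^ (-2 : ℤ) * q) q * qPochInf q q * rankGF w⁻¹ q

/-- The annulus `‖q‖ < ‖w‖ < ‖q‖⁻¹`. -/
def annulus (q : ℂ) : Set ℂ := {w | ‖q‖ < ‖w‖ ∧ ‖w * q‖ < 1}

theorem annulus_zero (q : ℂ) : (0 : ℂ) ∉ annulus q := by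
  rintro ⟨h, _⟩
  rw [norm_zero] at h
  exact absurd h (not_lt.mpr (norm_nonneg q))

theorem annulus_ne {q w : ℂ} (h : w ∈ annulus q) : w ≠ 0 := fun h0 => annulus_zero q (h0 ▸ h)

theorem annulus_div {q w : ℂ} (h : w ∈ annulus q) : ‖q / w‖ < 1 := by
  rw [norm_div, div_lt_one (norm_pos_iff.mpr (annulus_ne h))]
  exact h.1

theorem rankG_laurent {q : ℂ} (hq : ‖q‖ < 1) : ∃ g, LaurentOn (annulus q) g (rankG q) := by
  have hS : annulus q ⊆ {0}ᶜ := fun w hw => annulus_ne hw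
  obtain ⟨c1, h1⟩ := laurent_one_add (annulus q)
  obtain ⟨c2, h2⟩ := laurent_qp q 2 hq
  obtain ⟨c3, h3⟩ := laurent_qp q (-2) hq
  have h4 := LaurentOn.of_family (ι := AllParts) (S := annulus q) (f := fun w => rankGF w⁻¹ q)
    (fun s => q ^ s.1.sum) (fun s => (s.1.card : ℤ) - s.1.sup) (annulus_zero q) (fun w hw => by
      have h := (rank_family hq (annulus_ne hw) hw.2 (annulus_div hw)).1
      have h5 : (fun s : AllParts => w ^ ((s.1.card : ℤ) - s.1.sup) * q ^ s.1.sum) =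
        fun s : AllParts => q ^ s.1.sum * w ^ ((s.1.card : ℤ) - s.1.sup) := by
        funext s; exact mul_comm _ _
      rw [h5] at h
      exact h)
  obtain ⟨c5, h5⟩ := h1.mul (annulus_zero q) (h2.mono hS)
  obtain ⟨c6, h6⟩ := h5.mul (annulus_zero q) (h3.mono hS)
  obtain ⟨c7, h7⟩ := h6.mul (annulus_zero q) h4
  refine ⟨_, LaurentOn.const_mul (qPochInf q q) h7 |>.congr_fun ?_⟩
  intro w
  simp only [rankG]
  rw [mul_comm (w ^ 2), mul_comm (w ^ (-2 : ℤ))]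
  norm_cast
  ring

/-! ### Laurent coefficients of the modified rank generating function -/

/-- The triangular exponents `k (k - 1) / 2`. -/
def tri (k : ℤ) : ℤ := k * (k - 1) / 2

/-- The pentagonal exponents `t (3 t + 1) / 2`. -/
def pen (t : ℤ) : ℤ := t * (3 * t + 1) / 2

theorem two_tri (k : ℤ) : 2 * tri k = k * (k - 1) :=
  Int.mul_ediv_cancel' (Int.even_mul_pred_self k).two_dvd

theorem two_pen (t : ℤ) : 2 * pen t = t * (3 * t + 1) := by
  refine Int.mul_ediv_cancel' ?_
  have h : t * (3 * t + 1) = 2 * (t * t) + t * (t + 1) := by ring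
  rw [h]
  exact dvd_add (dvd_mul_right _ _) (Int.even_mul_succ_self t).two_dvd

/-- The theta function `(w;q)_∞ (q/w;q)_∞ (q;q)_∞` of the triple product. -/
noncomputable def theta (q w : ℂ) : ℂ := qPochInf w q * qPochInf (q / w) q * qPochInf q q

theorem theta_laurent {q : ℂ} (hq : ‖q‖ < 1) (hq0 : q ≠ 0) :
    LaurentOn {0}ᶜ (fun k => (-1) ^ k * q ^ tri k) (theta q) := jtp hq hq0

theorem theta_mul {q w : ℂ} (hq : ‖q‖ < 1) (hq0 : q ≠ 0) (hw : w ≠ 0) :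
    w * theta q (w * q) = - theta q w := by
  unfold theta
  have h1 := qp_succ w hq
  have h2 := qp_succ w⁻¹ hq
  have h3 : q / (w * q) = w⁻¹ := by field_simp
  have h4 : w⁻¹ * q = q / w := by field_simp
  rw [h3, h1, h2, h4]
  field_simp
  ring

theorem rankG_theta {q w : ℂ} (hq : ‖q‖ < 1) :
    (1 - w) * rankG q w = theta q (w ^ 2) * rankGF w⁻¹ q := by
  unfold theta rankG
  rw [qp_succ (w ^ 2) hq]
  have h : w ^ (-2 : ℤ) * q = q / w ^ 2 := by
    rw [zpow_neg, div_eq_mul_inv, mul_comm]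
    norm_cast
  rw [h]
  ring

/-- Multiplying `rank_U` by the theta function of `w²` leaves the rank generating function only inside
`rankG`, and the inhomogeneous part becomes a combination of theta series. -/
theorem rankG_functional {q w : ℂ} (hq : ‖q‖ < 1) (hq0 : q ≠ 0) (hw : 1 < ‖w‖)
    (hwq : ‖w * q‖ < 1) :
    w * rankG q (w * q) + rankG q w =
      q⁻¹ * (w ^ (-3 : ℤ) * theta q (w ^ 2)) + (-1) * (w ^ (-1 : ℤ) * theta q (w ^ 2)) := by
  have hw0 : w ≠ 0 := by rintro rfl; norm_num at hw
  have h1 : 1 - w * q ≠ 0 := by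
    intro h
    rw [← sub_eq_zero.mp h, norm_one] at hwq
    exact lt_irrefl _ hwq
  have h2 : w - 1 ≠ 0 := by
    intro h
    rw [sub_eq_zero.mp h, norm_one] at hw
    exact lt_irrefl _ hw
  have e1 := rankG_theta (w := w) hq
  have e2 := rankG_theta (w := w * q) hq
  have e3 := rank_U hq hw hwq hq0
  have e4 := theta_mul hq hq0 (pow_ne_zero 2 hw0)
  have e5 := theta_mul (w := w ^ 2 * q) hq hq0 (mul_ne_zero (pow_ne_zero 2 hw0) hq0)
  have e6 : (w * q) ^ 2 = w ^ 2 * q * q := by ring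
  rw [e6] at e2
  -- Both theta values are expressed through the one at `w² q²`.
  have e7 : q * w ^ 4 * theta q (w ^ 2 * q * q) = theta q (w ^ 2) := by
    linear_combination w ^ 2 * e5 - e4
  have e8 : w ^ (-3 : ℤ) = (w ^ 3)⁻¹ := by rw [zpow_neg]; norm_cast
  rw [e8, zpow_neg_one, ← e7]
  rw [← e7] at e1
  generalize theta q (w ^ 2 * q * q) = A at *
  have e9 : q⁻¹ * ((w ^ 3)⁻¹ * (q * w ^ 4 * A)) + -1 * (w⁻¹ * (q * w ^ 4 * A)) =
      w * A - q * w ^ 3 * A := by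
    field_simp
    ring
  rw [e9]
  apply mul_left_cancel₀ (mul_ne_zero h1 h2)
  linear_combination (w - 1) * w * e2 - (1 - w * q) * e1 + w * A * e3

/-- The sums `Σ_{|t| ≤ m} (-1)^t q^{-t(3t+1)/2}` that occur in the coefficients of `rankG`. -/
noncomputable def falsePent (q : ℂ) (m : ℕ) : ℂ :=
  ∑ t ∈ Finset.Icc (-(m : ℤ)) m, (-1) ^ t * q ^ (-pen t)

theorem falsePent_zero (q : ℂ) : falsePent q 0 = 1 := by
  simp [falsePent, pen]

theorem falsePent_succ (q : ℂ) (m : ℕ) : falsePent q (m + 1) = falsePent q m +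
    ((-1) ^ (m + 1) * q ^ (-pen (m + 1)) + (-1) ^ (m + 1) * q ^ (-pen (-(m + 1)))) := by
  have h : Finset.Icc (-((m + 1 : ℕ) : ℤ)) ((m + 1 : ℕ) : ℤ) =
      insert ((m : ℤ) + 1) (insert (-((m : ℤ) + 1)) (Finset.Icc (-(m : ℤ)) m)) := by
    ext x
    simp only [Finset.mem_insert, Finset.mem_Icc]
    push_cast
    omega
  unfold falsePent
  rw [h, Finset.sum_insert, Finset.sum_insert]
  · rw [zpow_neg (-1 : ℂ), ← inv_zpow, show (-1 : ℂ)⁻¹ = -1 by norm_num]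
    norm_cast
    ring
  · simp only [Finset.mem_Icc]; omega
  · simp only [Finset.mem_insert, Finset.mem_Icc]; omega

theorem tri_add_one (k : ℤ) : tri (k + 1) = tri k + k := by
  have h1 := two_tri (k + 1)
  have h2 := two_tri k
  linarith

theorem tri_reflect (k : ℤ) : tri (1 - k) = tri k := by
  have h1 := two_tri (1 - k)
  have h2 := two_tri k
  linarith

theorem neg_one_zpow_even (m : ℤ) : (-1 : ℂ) ^ (2 * m) = 1 := by
  rw [zpow_mul]; norm_num

theorem neg_one_zpow_mul_self (m : ℤ) : (-1 : ℂ) ^ m * (-1) ^ m = 1 := by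
  rw [← mul_zpow]; norm_num

/-- Comparison of coefficients in `rankG_functional` on the annulus `1 < |w| < |q|⁻¹`, where both
`w` and `wq` lie in the domain of the expansion. -/
theorem rankG_rec {q : ℂ} (hq : ‖q‖ < 1) (hq0 : q ≠ 0) {g : ℤ → ℂ}
    (hg : LaurentOn (annulus q) g (rankG q)) (k : ℤ) :
    g (k + 1) + q ^ k * g k =
      q⁻¹ * (if 2 ∣ k + 4 then (-1) ^ ((k + 4) / 2) * q ^ tri ((k + 4) / 2) else 0) -
      (if 2 ∣ k + 2 then (-1) ^ ((k + 2) / 2) * q ^ tri ((k + 2) / 2) else 0) := by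
  have hqn : 0 < ‖q‖ := norm_pos_iff.mpr hq0
  set S : Set ℂ := {w | 1 < ‖w‖ ∧ ‖w * q‖ < 1} with hS
  have hS0 : (0 : ℂ) ∉ S := by
    rintro ⟨h, _⟩
    rw [norm_zero] at h
    linarith
  have hS1 : S ⊆ {0}ᶜ := fun w hw h => hS0 (by rwa [← Set.mem_singleton_iff.mp h])
  have hS2 : S ⊆ annulus q := fun w hw => ⟨hq.trans hw.1, hw.2⟩
  have hS3 : ∀ z ∈ S, z * q ∈ annulus q := by
    intro z hz
    refine ⟨?_, ?_⟩
    · rw [norm_mul]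
      exact lt_mul_of_one_lt_left hqn hz.1
    · rw [norm_mul]
      exact mul_lt_one_of_nonneg_of_lt_one_left (norm_nonneg _) hz.2 hq.le
  have h1 := ((hg.dilate q hS3).shift hS0 1).add (hg.mono hS2)
  have hth := (theta_laurent hq hq0).sq
  have h2 := (((hth.shift (by simp) (-3)).const_mul q⁻¹).add
    ((hth.shift (by simp) (-1)).const_mul (-1))).mono hS1
  have h3 : LaurentOn S (fun k => g (k - 1) * q ^ (k - 1) + g k) (fun w =>
      q⁻¹ * (w ^ (-3 : ℤ) * theta q (w ^ 2)) + (-1) * (w ^ (-1 : ℤ) * theta q (w ^ 2))) := by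
    intro w hw
    have := h1 w hw
    simp only
    rw [← rankG_functional hq hq0 hw.1 hw.2]
    simpa only [zpow_one] using this
  obtain ⟨ρ, hρ1, hρ2⟩ := exists_between (one_lt_inv₀ hqn |>.mpr hq)
  have hρ : ∀ z : ℂ, ‖z‖ = ρ → z ∈ S := by
    intro z hz
    refine ⟨hz ▸ hρ1, ?_⟩
    rw [norm_mul, hz]
    calc ρ * ‖q‖ < ‖q‖⁻¹ * ‖q‖ := mul_lt_mul_of_pos_right hρ2 hqn
      _ = 1 := inv_mul_cancel₀ hqn.ne'
  have h4 := congrFun (LaurentOn.unique (by linarith) hρ h3 h2) (k + 1)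
  simp only [add_sub_cancel_right, sub_neg_eq_add, add_assoc] at h4
  rw [show (1 : ℤ) + 3 = 4 by norm_num, show (1 : ℤ) + 1 = 2 by norm_num] at h4
  linear_combination h4

/-- The Laurent coefficients of `rankG`. The recurrence makes the normalised coefficients
`y k = -(-1)^k q^{-tri k} g k` differ by pentagonal terms, so that `y k + y (1 - k)` is constant, and the
vanishing of `rankG` at `w = -1` forces this constant to be zero. -/
theorem rankG_coeff {q : ℂ} (hq : ‖q‖ < 1) (hq0 : q ≠ 0) {g : ℤ → ℂ}
    (hg : LaurentOn (annulus q) g (rankG q)) (N : ℕ) :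
    g (N + 1) = (-1) ^ N * q ^ tri (N + 1) * falsePent q (N / 2) ∧ g (-N) = g (N + 1) := by
  set y : ℤ → ℂ := fun k => -((-1) ^ k * q ^ (-tri k) * g k) with hy
  have hgy : ∀ k, g k = -((-1) ^ k * q ^ tri k * y k) := by
    intro k
    simp only [hy]
    have h1 : q ^ tri k * q ^ (-tri k) = 1 := by rw [← zpow_add₀ hq0]; simp
    have h2 := neg_one_zpow_mul_self k
    linear_combination (-(1 : ℂ)) * g k * h1 - g k * (q ^ tri k * q ^ (-tri k)) * h2
  have hrec : ∀ k, y (k + 1) - y k = (-1) ^ k * q ^ (-tri (k + 1)) * (g (k + 1) + q ^ k * g k) := by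
    intro k
    simp only [hy]
    have h1 : q ^ (-tri k) = q ^ (-tri (k + 1)) * q ^ k := by
      rw [← zpow_add₀ hq0, tri_add_one]; congr 1; ring
    rw [h1, zpow_add₀ (by norm_num : (-1 : ℂ) ≠ 0), zpow_one]
    ring
  have hodd : ∀ m : ℤ, y (2 * m + 1 + 1) - y (2 * m + 1) = 0 := by
    intro m
    rw [hrec, rankG_rec hq hq0 hg, if_neg (by omega), if_neg (by omega)]
    ring
  have heven : ∀ m : ℤ, y (2 * m + 1) - y (2 * m) =
      (-1) ^ m * q ^ (-pen m) + (-1) ^ m * q ^ (-pen (-m)) := by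
    intro m
    rw [hrec, rankG_rec hq hq0 hg, if_pos (by omega), if_pos (by omega)]
    have e1 : (2 * m + 4) / 2 = m + 2 := by omega
    have e2 : (2 * m + 2) / 2 = m + 1 := by omega
    have t1 := two_tri (2 * m + 1)
    have t2 := two_tri (m + 2)
    have t3 := two_tri (m + 1)
    have t4 := two_pen m
    have t5 := two_pen (-m)
    have e3 : q ^ (-pen (-m)) = q ^ (-tri (2 * m + 1)) * q⁻¹ * q ^ tri (m + 2) := by
      rw [← zpow_neg_one, ← zpow_add₀ hq0, ← zpow_add₀ hq0]
      congr 1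
      linarith
    have e4 : q ^ (-pen m) = q ^ (-tri (2 * m + 1)) * q ^ tri (m + 1) := by
      rw [← zpow_add₀ hq0]
      congr 1
      linarith
    have hn : (-1 : ℂ) ≠ 0 := by norm_num
    rw [e1, e2, e3, e4, neg_one_zpow_even, zpow_add₀ hn m 2, zpow_add₀ hn m 1]
    norm_num
    ring
  have hsym : ∀ k, y (k + 1) + y (-k) = y k + y (1 - k) := by
    intro k
    rcases Int.even_or_odd' k with ⟨m, rfl | rfl⟩
    · have h1 := heven m
      have h2 := heven (-m)
      rw [neg_neg, zpow_neg, ← inv_zpow, show (-1 : ℂ)⁻¹ = -1 by norm_num] at h2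
      rw [show 1 - 2 * m = 2 * -m + 1 by ring, show -(2 * m) = 2 * -m by ring]
      linear_combination h1 - h2
    · have h1 := hodd m
      have h2 := hodd (-m - 1)
      rw [show 1 - (2 * m + 1) = 2 * (-m - 1) + 1 + 1 by ring,
        show -(2 * m + 1) = 2 * (-m - 1) + 1 by ring]
      linear_combination h1 - h2
  have hconst : ∀ k, y k + y (1 - k) = y 0 + y 1 := by
    intro k
    induction k using Int.induction_on with
    | zero => simp
    | succ i ih =>
      rw [← ih, ← hsym i, show 1 - ((i : ℤ) + 1) = -i by ring]
    | pred i ih =>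
      rw [← ih]
      have := hsym (-(i : ℤ) - 1)
      rw [show -(i : ℤ) - 1 + 1 = -i by ring, show -(-(i : ℤ) - 1) = 1 - -(i : ℤ) by ring] at this
      rw [this]
  -- At `w = -1` the sum of the series and its reflection under `k ↦ 1 - k` is the constant
  -- `y 0 + y 1` times a theta value that is not zero.
  have hkappa : y 0 + y 1 = 0 := by
    have hm : (-1 : ℂ) ∈ annulus q := by
      refine ⟨by simpa using hq, by simpa using hq⟩
    have h1 : HasSum (fun k => q ^ tri k * y k) 0 := by
      have h := (hg _ hm).2.neg
      have hz : rankG q (-1) = 0 := by simp [rankG]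
      rw [hz, neg_zero] at h
      have he : (fun k => q ^ tri k * y k) = fun k : ℤ => -(g k * (-1) ^ k) := by
        funext k
        rw [hgy]
        have := neg_one_zpow_mul_self k
        linear_combination (-(1 : ℂ)) * q ^ tri k * y k * this
      rw [he]
      exact h
    have h2 : HasSum (fun k => q ^ tri k * y (1 - k)) 0 := by
      have h := ((Equiv.subLeft (1 : ℤ)).hasSum_iff (f := fun k => q ^ tri k * y k)).mpr h1
      have he : (fun k => q ^ tri k * y (1 - k)) =
          (fun k => q ^ tri k * y k) ∘ (Equiv.subLeft (1 : ℤ)) := by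
        funext k
        simp only [Function.comp, Equiv.subLeft_apply, tri_reflect]
      rw [he]
      exact h
    have h3 : HasSum (fun k : ℤ => q ^ tri k) (theta q (-1)) := by
      have h := (theta_laurent hq hq0 (-1) (by simp)).2
      have he : (fun k : ℤ => q ^ tri k) = fun k : ℤ => (-1) ^ k * q ^ tri k * (-1) ^ k := by
        funext k
        have := neg_one_zpow_mul_self k
        linear_combination (-(1 : ℂ)) * q ^ tri k * this
      rw [he]
      exact h
    have h4 := h3.mul_right (y 0 + y 1)
    have h5 := h1.add h2
    have he : (fun k => q ^ tri k * y k + q ^ tri k * y (1 - k)) =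
        fun k => q ^ tri k * (y 0 + y 1) := by
      funext k; rw [← hconst k]; ring
    rw [he] at h5
    have h6 := h4.unique h5
    rw [add_zero] at h6
    refine (mul_eq_zero.mp h6).resolve_left ?_
    unfold theta
    have hq' : ‖-q‖ < 1 := by rwa [norm_neg]
    refine mul_ne_zero (mul_ne_zero ?_ ?_) (qp_ne_zero' hq hq)
    · rw [qp_succ _ hq, neg_one_mul]
      exact mul_ne_zero (by norm_num) (qp_ne_zero' hq hq')
    · rw [div_neg, div_one]
      exact qp_ne_zero' hq hq'
  have hy1 : y 1 = 1 := by
    have h := heven 0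
    norm_num [pen] at h
    linear_combination (1 / 2 : ℂ) * h + (1 / 2 : ℂ) * hkappa
  have hyP : ∀ m : ℕ, y (2 * m + 1) = falsePent q m := by
    intro m
    induction m with
    | zero => simp [hy1, falsePent_zero]
    | succ m ih =>
      have h1 := hodd m
      have h2 := heven (m + 1)
      rw [show 2 * ((m : ℤ) + 1) = 2 * m + 1 + 1 by ring] at h2
      rw [falsePent_succ]
      push_cast
      rw [show 2 * ((m : ℤ) + 1) + 1 = 2 * m + 1 + 1 + 1 by ring, ← ih]
      norm_cast at h1 h2 ⊢
      linear_combination h1 + h2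
  have hyN : y (N + 1) = falsePent q (N / 2) := by
    rcases Nat.even_or_odd' N with ⟨m, rfl | rfl⟩
    · rw [Nat.mul_div_cancel_left _ two_pos, ← hyP]
      push_cast
      rfl
    · rw [show (2 * m + 1) / 2 = m by omega, ← hyP]
      have h1 := hodd m
      push_cast
      linear_combination h1
  have hs := hconst (N + 1)
  rw [hkappa, show 1 - ((N : ℤ) + 1) = -N by ring] at hs
  have hyN' : y (-N) = - y (N + 1) := by linear_combination hs
  have htr : tri (-(N : ℤ)) = tri (N + 1) := by
    rw [← tri_reflect]; congr 1; ring
  have hn : (-1 : ℂ) ≠ 0 := by norm_num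
  have hneg : (-1 : ℂ) ^ (-(N : ℤ)) = (-1) ^ N := by
    rw [zpow_neg, ← inv_zpow, show (-1 : ℂ)⁻¹ = -1 by norm_num, zpow_natCast]
  refine ⟨?_, ?_⟩
  · rw [hgy, hyN, zpow_add₀ hn, zpow_one, zpow_natCast]
    ring
  · rw [hgy, hgy (N + 1), hyN', htr, zpow_add₀ hn, zpow_one, zpow_natCast, hneg]
    ring

/-- The Hecke-type double series of the modified rank generating function, summed over `t` first. -/
theorem rankGFtilde_hasSum {q z : ℂ} (hq : ‖q‖ < 1) (hq0 : q ≠ 0) (hz : ‖q‖ < ‖z‖)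
    (hzq : ‖z * q‖ < 1) :
    HasSum (fun N : ℕ => (-1) ^ N * q ^ tri (N + 1) * falsePent q (N / 2) *
      (z ^ (N + 1) + z ^ (-(N : ℤ)))) (rankGFtilde z q) := by
  obtain ⟨g, hg⟩ := rankG_laurent hq
  have hz0 : z ≠ 0 := by rintro rfl; rw [norm_zero] at hz; linarith [norm_nonneg q]
  have hzn : 0 < ‖z‖ := norm_pos_iff.mpr hz0
  have hm : z⁻¹ ∈ annulus q := by
    refine ⟨?_, ?_⟩
    · rw [norm_inv, lt_inv_comm₀ (norm_pos_iff.mpr hq0) hzn, ← one_div, lt_div_iff₀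
        (norm_pos_iff.mpr hq0), ← norm_mul]
      exact hzq
    · rw [norm_mul, norm_inv, inv_mul_lt_one₀ hzn]
      exact hz
  have h1 := (hg _ hm).2
  have h2 : HasSum (fun k : ℤ => g (k + 1) * z⁻¹ ^ (k + 1)) (rankG q z⁻¹) :=
    ((Equiv.addRight (1 : ℤ)).hasSum_iff (f := fun k : ℤ => g k * z⁻¹ ^ k)).mpr h1
  have h3 := h2.nat_add_neg_add_one.mul_left z
  have h4 : z * rankG q z⁻¹ = rankGFtilde z q := by
    unfold rankG rankGFtilde
    rw [inv_inv, inv_zpow', neg_neg, inv_pow, zpow_neg]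
    norm_cast
    field_simp
    ring
  rw [h4] at h3
  have h5 : (fun N : ℕ => (-1) ^ N * q ^ tri (N + 1) * falsePent q (N / 2) *
      (z ^ (N + 1) + z ^ (-(N : ℤ)))) = fun n : ℕ => z * (g ((n : ℤ) + 1) * z⁻¹ ^ ((n : ℤ) + 1) +
        g (-((n : ℤ) + 1) + 1) * z⁻¹ ^ (-((n : ℤ) + 1) + 1)) := by
    funext N
    obtain ⟨e1, e2⟩ := rankG_coeff hq hq0 hg N
    rw [show -((N : ℤ) + 1) + 1 = -N by ring, e2, e1, inv_zpow', inv_zpow', neg_neg, neg_add,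
      zpow_add₀ hz0, zpow_natCast, zpow_neg_one, pow_succ]
    field_simp
    ring
  rw [h5]
  exact h3

/-! ### The Hecke-type double series and extraction of exponents divisible by five -/

theorem AbsSum.congr {ι : Type*} {f g : ι → ℂ} {v : ℂ} (h : ∀ i, f i = g i) (hg : AbsSum g v) :
    AbsSum f v := by
  rw [funext h]; exact hg

/-- The quadratic exponent `N(N+1)/2 - t(3t+1)/2` of the Hecke-type series, for `p = (N, t)`. -/
def heckeExp (p : ℕ × ℤ) : ℤ := tri (p.1 + 1) - pen p.2

/-- The cone `|2t| ≤ N` of summation of the Hecke-type series, for `p = (N, t)`. -/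
def InCone (p : ℕ × ℤ) : Prop := -(p.1 : ℤ) ≤ 2 * p.2 ∧ 2 * p.2 ≤ p.1

instance (p : ℕ × ℤ) : Decidable (InCone p) := by unfold InCone; infer_instance

/-- On the cone the exponent grows at least linearly in `N`, by `4 t² ≤ N²`. -/
theorem heckeExp_bound {p : ℕ × ℤ} (h : InCone p) : (p.1 : ℤ) ≤ 4 * heckeExp p := by
  obtain ⟨N, t⟩ := p
  obtain ⟨h1, h2⟩ := h
  simp only at h1 h2 ⊢
  have e1 := two_tri (N + 1)
  have e2 := two_pen t
  simp only [heckeExp]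
  have h3 : 0 ≤ ((N : ℤ) - 2 * t) * (N + 2 * t) := mul_nonneg (by linarith) (by linarith)
  have h4 : (0 : ℤ) ≤ N * N := mul_self_nonneg _
  nlinarith

/-- A series over the cone with bounded coefficients converges absolutely as soon as its exponents
satisfy the linear bound of `heckeExp_bound`. -/
theorem cone_summable {x : ℂ} (hx0 : x ≠ 0) (hx : ‖x‖ < 1) (e : ℕ × ℤ → ℤ)
    (he : ∀ p, InCone p → (p.1 : ℤ) ≤ 4 * e p) (c : ℕ × ℤ → ℂ) (C : ℝ) (hc : ∀ p, ‖c p‖ ≤ C) :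
    Summable (fun p => ‖if InCone p then c p * x ^ e p else 0‖) := by
  -- With `x = y⁸`, the bounds `2|t| ≤ N ≤ 4 e` give `N + |t| ≤ 8 e`, so the series is dominated by
  -- a product of two geometric series in `|y|`.
  obtain ⟨y, hy⟩ := IsAlgClosed.exists_pow_nat_eq x (n := 8) (by norm_num)
  have hy0 : y ≠ 0 := by rintro rfl; exact hx0 (by rw [← hy]; norm_num)
  have hyn : 0 < ‖y‖ := norm_pos_iff.mpr hy0
  have hy1 : ‖y‖ < 1 := by
    rw [← hy, norm_pow] at hx
    exact lt_of_not_ge fun h => absurd (one_le_pow₀ h) (not_le.mpr hx)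
  have hg := summable_geometric_of_lt_one hyn.le hy1
  have hgz : Summable (fun t : ℤ => ‖y‖ ^ t.natAbs) := by
    refine Summable.of_nat_of_neg ?_ ?_ <;> simpa using hg
  have hprod := (hg.mul_of_nonneg hgz (fun _ => pow_nonneg hyn.le _)
    (fun _ => pow_nonneg hyn.le _)).mul_left C
  refine Summable.of_nonneg_of_le (fun _ => norm_nonneg _) (fun p => ?_) hprod
  have hC : 0 ≤ C := (norm_nonneg _).trans (hc p)
  split_ifs with hp
  · rw [norm_mul]
    refine mul_le_mul (hc p) ?_ (norm_nonneg _) hC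
    have h1 := he p hp
    rw [← hy, norm_zpow, norm_pow, ← pow_add, ← zpow_natCast, ← zpow_natCast, ← zpow_mul]
    refine zpow_le_zpow_right_of_le_one₀ hyn hy1.le ?_
    obtain ⟨h2, h3⟩ := hp
    omega
  · rw [norm_zero]
    exact mul_nonneg hC (mul_nonneg (pow_nonneg hyn.le _) (pow_nonneg hyn.le _))

/-- The terms of the Hecke-type double series of `rankGFtilde z q`. -/
noncomputable def heckeTerm (z q : ℂ) (p : ℕ × ℤ) : ℂ :=
  if InCone p then (-1) ^ p.1 * (-1) ^ p.2 * (z ^ (p.1 + 1) + z ^ (-(p.1 : ℤ))) * q ^ heckeExp p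
  else 0

/-- The double series of `rankGFtilde z q`, wherever it converges absolutely. -/
theorem heckeTerm_absSum {z q : ℂ} (hq : ‖q‖ < 1) (hq0 : q ≠ 0) (hz : ‖q‖ < ‖z‖)
    (hzq : ‖z * q‖ < 1) (hs : Summable (fun p => ‖heckeTerm z q p‖)) :
    AbsSum (heckeTerm z q) (rankGFtilde z q) := by
  have h := AbsSum.of_summable hs
  have hfib : ∀ N : ℕ, HasSum (fun t => heckeTerm z q (N, t))
      ((-1) ^ N * q ^ tri (N + 1) * falsePent q (N / 2) * (z ^ (N + 1) + z ^ (-(N : ℤ)))) := by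
    intro N
    have hoff : ∀ t ∉ Finset.Icc (-((N / 2 : ℕ) : ℤ)) ((N / 2 : ℕ) : ℤ),
        heckeTerm z q (N, t) = 0 := by
      intro t ht
      unfold heckeTerm
      rw [if_neg]
      rintro ⟨h1, h2⟩
      simp only at h1 h2
      refine ht (Finset.mem_Icc.mpr ⟨?_, ?_⟩) <;> push_cast <;> omega
    have h1 : HasSum (fun t => heckeTerm z q (N, t))
        (∑ t ∈ Finset.Icc (-((N / 2 : ℕ) : ℤ)) ((N / 2 : ℕ) : ℤ), heckeTerm z q (N, t)) :=
      hasSum_sum_of_ne_finset_zero hoff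
    have h2 : ∑ t ∈ Finset.Icc (-((N / 2 : ℕ) : ℤ)) ((N / 2 : ℕ) : ℤ), heckeTerm z q (N, t) =
        (-1) ^ N * q ^ tri (N + 1) * falsePent q (N / 2) * (z ^ (N + 1) + z ^ (-(N : ℤ))) := by
      rw [falsePent, Finset.mul_sum, Finset.sum_mul]
      refine Finset.sum_congr rfl fun t ht => ?_
      rw [Finset.mem_Icc] at ht
      have hc : InCone (N, t) := by
        unfold InCone
        simp only
        push_cast at ht
        omega
      rw [heckeTerm, if_pos hc, heckeExp, sub_eq_add_neg, zpow_add₀ hq0]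
      ring
    rw [← h2]
    exact h1
  have h3 := h.2.prod_fiberwise hfib
  have h4 := h3.unique (rankGFtilde_hasSum hq hq0 hz hzq)
  rw [← h4]
  exact h

theorem heckeTerm_absSum_one {z q : ℂ} (hq : ‖q‖ < 1) (hq0 : q ≠ 0) (hz : ‖z‖ = 1) :
    AbsSum (heckeTerm z q) (rankGFtilde z q) := by
  refine heckeTerm_absSum hq hq0 (by rwa [hz]) (by rwa [norm_mul, hz, one_mul]) ?_
  refine cone_summable hq0 hq heckeExp (fun p => heckeExp_bound)
    (fun p => (-1) ^ p.1 * (-1) ^ p.2 * (z ^ (p.1 + 1) + z ^ (-(p.1 : ℤ)))) 2 fun p => ?_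
  rw [norm_mul, norm_mul, norm_pow, norm_zpow, norm_neg, norm_one, one_pow, one_zpow, one_mul,
    one_mul]
  refine (norm_add_le _ _).trans ?_
  rw [norm_pow, norm_zpow, hz, one_pow, one_zpow]
  norm_num

theorem zeta5_prim : IsPrimitiveRoot zeta5 5 := by
  have := Complex.isPrimitiveRoot_exp 5 (by norm_num)
  unfold zeta5
  simpa using this

theorem zeta5_norm : ‖zeta5‖ = 1 := zeta5_prim.norm'_eq_one (by norm_num)

theorem zeta5_pow : zeta5 ^ 5 = 1 := zeta5_prim.pow_eq_one

theorem zeta5_sum : 1 + zeta5 + zeta5 ^ 2 + zeta5 ^ 3 + zeta5 ^ 4 = 0 := by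
  have := zeta5_prim.geom_sum_eq_zero (by norm_num)
  simpa [Finset.sum_range_succ] using this

/-- The terms whose exponent is divisible by `5` are extracted by averaging over the fifth roots
of unity. -/
theorem section_absSum {ι : Type*} {c : ι → ℂ} {e : ι → ℤ} {x : ℂ} {f : ℂ → ℂ}
    (h : ∀ j : ℕ, AbsSum (fun i => c i * (zeta5 ^ j * x) ^ e i) (f (zeta5 ^ j * x))) :
    AbsSum (fun i => if 5 ∣ e i then c i * x ^ e i else 0)
      (1 / 5 * ∑ j ∈ Finset.range 5, f (zeta5 ^ j * x)) := by
  have h1 : AbsSum (fun i => ∑ j ∈ Finset.range 5, c i * (zeta5 ^ j * x) ^ e i)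
      (∑ j ∈ Finset.range 5, f (zeta5 ^ j * x)) := by
    simp only [Finset.sum_range_succ, Finset.sum_range_zero, zero_add]
    exact (((((h 0).add (h 1)).add (h 2)).add (h 3)).add (h 4))
  refine AbsSum.congr (fun i => ?_) (h1.const_mul (1 / 5))
  have h2 : ∀ j : ℕ, c i * (zeta5 ^ j * x) ^ e i = c i * x ^ e i * (zeta5 ^ e i) ^ j := by
    intro j
    rw [mul_zpow, ← zpow_natCast, ← zpow_natCast, ← zpow_mul, ← zpow_mul, mul_comm (j : ℤ)]
    ring
  simp only [h2, ← Finset.mul_sum]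
  split_ifs with hd
  · have : zeta5 ^ e i = 1 := (zeta5_prim.zpow_eq_one_iff_dvd _).mpr hd
    rw [this]
    norm_num
    ring
  · have h3 : zeta5 ^ e i ≠ 1 := fun h => hd ((zeta5_prim.zpow_eq_one_iff_dvd _).mp h)
    have h4 : (zeta5 ^ e i) ^ 5 = 1 := by
      rw [← zpow_natCast, ← zpow_mul, mul_comm, zpow_mul, zpow_natCast, zeta5_pow, one_zpow]
    rw [geom_sum_eq h3, h4]
    simp

/-- The power series with coefficients `a n` converges absolutely on the punctured unit disc, to
`rankGFtilde zeta5`. If it diverged at every point other than `0`, its sum would have the default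
value `0` there and `rankGFtilde zeta5` would vanish, but the constant term of its Laurent expansion is
`1 + zeta5`. So it converges near `0`, and its coefficients are those of the Laurent expansion. -/
theorem coeff_laurent {a : ℕ → ℂ}
    (ha : ∀ q : ℂ, ‖q‖ < 1 → rankGFtilde zeta5 q = ∑' n : ℕ, a n * q ^ n) {x : ℂ} (hx : ‖x‖ < 1)
    (hx0 : x ≠ 0) : AbsSum (fun n : ℕ => a n * x ^ (n : ℤ)) (rankGFtilde zeta5 x) := by
  set S : Set ℂ := {w | w ≠ 0 ∧ ‖w‖ < 1} with hS
  have hS0 : (0 : ℂ) ∉ S := fun h => h.1 rfl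
  set c : ℕ × ℤ → ℂ := fun p => if InCone p then
    (-1) ^ p.1 * (-1) ^ p.2 * (zeta5 ^ (p.1 + 1) + zeta5 ^ (-(p.1 : ℤ))) else 0 with hc
  have hfam : ∀ q, heckeTerm zeta5 q = fun p => c p * q ^ heckeExp p := by
    intro q; funext p
    simp only [heckeTerm, hc, ite_mul, zero_mul]
  have hL := LaurentOn.of_family (S := S) (f := rankGFtilde zeta5) c heckeExp hS0 (fun w hw => by
    have := heckeTerm_absSum_one hw.2 hw.1 zeta5_norm
    rw [hfam] at this
    exact this)
  set b : ℤ → ℂ := fun k => ∑' i : {i // heckeExp i = k}, c i with hb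
  -- Only `(N, t) = (0, 0)` has exponent zero.
  have hb0 : b 0 = 1 + zeta5 := by
    have h00 : heckeExp (0, 0) = 0 := by simp [heckeExp, tri, pen]
    have : b 0 = c (⟨(0, 0), h00⟩ : {i // heckeExp i = 0}) := by
      refine tsum_eq_single (⟨(0, 0), h00⟩ : {i // heckeExp i = 0}) ?_
      rintro ⟨⟨N, t⟩, hp⟩ hne
      simp only [hc]
      rw [if_neg]
      intro hcone
      have h1 := heckeExp_bound hcone
      rw [hp] at h1
      obtain ⟨h2, h3⟩ := hcone
      simp only at h1 h2 h3
      apply hne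
      have hN : N = 0 := by omega
      have ht : t = 0 := by omega
      subst hN ht
      rfl
    rw [this]
    simp [hc, InCone]
    ring
  set a' : ℤ → ℂ := fun k => if 0 ≤ k then a k.toNat else 0 with ha'
  have hnat : ∀ (w v : ℂ), AbsSum (fun n : ℕ => a n * w ^ (n : ℤ)) v ↔
      AbsSum (fun k : ℤ => a' k * w ^ k) v := by
    intro w v
    rw [← AbsSum.of_injective (e := fun n : ℕ => (n : ℤ)) Nat.cast_injective]
    · simp [Function.comp_def, ha']
    · intro k hk
      simp only [ha']
      rw [if_neg, zero_mul]
      intro h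
      exact hk ⟨k.toNat, Int.toNat_of_nonneg h⟩
  -- A divergent series has the value `0` here, so divergence everywhere would give a Laurent
  -- expansion with zero coefficients.
  have hex : ∃ w ∈ S, Summable (fun n : ℕ => a n * w ^ n) := by
    by_contra hcon
    push Not at hcon
    have hz : LaurentOn S 0 (rankGFtilde zeta5) := by
      intro w hw
      rw [ha w hw.2, tsum_eq_zero_of_not_summable (hcon w hw)]
      simp only [Pi.zero_apply, zero_mul, norm_zero]
      exact ⟨summable_zero, hasSum_zero⟩
    have h1 := LaurentOn.unique (ρ := 1 / 2) (by norm_num) (fun z hz => by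
      refine ⟨?_, ?_⟩
      · rintro rfl; norm_num at hz
      · rw [hz]; norm_num) hL hz
    have h2 : b 0 = 0 := congrFun h1 0
    rw [hb0] at h2
    have h3 : zeta5 = -1 := by linear_combination h2
    have h4 := zeta5_pow
    rw [h3] at h4
    norm_num at h4
  obtain ⟨w, hw, hws⟩ := hex
  have hwn : 0 < ‖w‖ := norm_pos_iff.mpr hw.1
  set S' : Set ℂ := {z | z ≠ 0 ∧ ‖z‖ < ‖w‖} with hS'
  have hL' : LaurentOn S' a' (rankGFtilde zeta5) := by
    intro z hz
    have h1 : Summable (fun n : ℕ => ‖a n * z ^ n‖) := by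
      obtain ⟨C, hC⟩ : ∃ C, ∀ n, ‖a n * w ^ n‖ ≤ C := by
        obtain ⟨C, hC⟩ := hws.tendsto_atTop_zero.norm.bddAbove_range
        exact ⟨C, fun n => hC (Set.mem_range_self n)⟩
      have hr : ‖z‖ / ‖w‖ < 1 := (div_lt_one hwn).mpr hz.2
      refine Summable.of_nonneg_of_le (fun _ => norm_nonneg _) (fun n => ?_)
        ((summable_geometric_of_lt_one (div_nonneg (norm_nonneg z) hwn.le) hr).mul_left C)
      have h2 : ‖a n * w ^ n‖ ≤ C := hC n
      have h3 : ‖a n * z ^ n‖ = ‖a n * w ^ n‖ * (‖z‖ / ‖w‖) ^ n := by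
        rw [norm_mul, norm_mul, norm_pow, norm_pow, div_pow]
        field_simp
      rw [h3]
      exact mul_le_mul_of_nonneg_right h2 (pow_nonneg (div_nonneg (norm_nonneg z) hwn.le) _)
    have h2 := AbsSum.of_summable h1
    rw [← ha z (hz.2.trans hw.2)] at h2
    exact (hnat z _).mp (by simpa only [zpow_natCast] using h2)
  have hsub : S' ⊆ S := fun z hz => ⟨hz.1, hz.2.trans hw.2⟩
  have hab : b = a' := by
    refine LaurentOn.unique (ρ := ‖w‖ / 2) (S := S') (by positivity) (fun z hz => ?_)
      (hL.mono hsub) hL'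
    refine ⟨?_, ?_⟩
    · rintro rfl
      rw [norm_zero] at hz
      linarith
    · rw [hz]; linarith
  rw [hnat, ← hab]
  exact hL x ⟨hx0, hx⟩

/-- The terms of the double series with exponent divisible by `5` sum to the extracted series at `x⁵`. -/
theorem U5_hecke {a : ℕ → ℂ}
    (ha : ∀ q : ℂ, ‖q‖ < 1 → rankGFtilde zeta5 q = ∑' n : ℕ, a n * q ^ n) {x : ℂ} (hx : ‖x‖ < 1)
    (hx0 : x ≠ 0) : AbsSum (fun p => if 5 ∣ heckeExp p then heckeTerm zeta5 x p else 0)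
      (∑' n : ℕ, a (5 * n) * (x ^ 5) ^ n) := by
  have hn : ∀ j : ℕ, ‖zeta5 ^ j * x‖ < 1 := fun j => by
    rw [norm_mul, norm_pow, zeta5_norm, one_pow, one_mul]; exact hx
  have hne : ∀ j : ℕ, zeta5 ^ j * x ≠ 0 := fun j =>
    mul_ne_zero (pow_ne_zero _ (zeta5_prim.ne_zero (by norm_num))) hx0
  have h1 := section_absSum (x := x) (f := rankGFtilde zeta5) (fun j => coeff_laurent ha (hn j) (hne j))
  set v := 1 / 5 * ∑ j ∈ Finset.range 5, rankGFtilde zeta5 (zeta5 ^ j * x) with hv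
  have h2 := section_absSum (x := x) (f := rankGFtilde zeta5) (e := heckeExp)
    (c := fun p => if InCone p then
    (-1) ^ p.1 * (-1) ^ p.2 * (zeta5 ^ (p.1 + 1) + zeta5 ^ (-(p.1 : ℤ))) else 0) (fun j => by
      have := heckeTerm_absSum_one (hn j) (hne j) zeta5_norm
      refine AbsSum.congr (fun p => ?_) this
      simp only [heckeTerm, ite_mul, zero_mul])
  have h3 : AbsSum (fun n : ℕ => a (5 * n) * (x ^ 5) ^ n) v := by
    have hinj : Function.Injective (fun n : ℕ => 5 * n) := fun a b h => by simpa using h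
    rw [← AbsSum.of_injective hinj] at h1
    · refine AbsSum.congr (fun n => ?_) h1
      have hd : (5 : ℤ) ∣ ((5 * n : ℕ) : ℤ) := ⟨n, by push_cast; ring⟩
      change _ = if (5 : ℤ) ∣ ((5 * n : ℕ) : ℤ) then a (5 * n) * x ^ ((5 * n : ℕ) : ℤ) else 0
      rw [if_pos hd, zpow_natCast, pow_mul]
    · intro k hk
      rw [if_neg]
      rintro h
      obtain ⟨m, rfl⟩ : 5 ∣ k := by exact_mod_cast h
      exact hk ⟨m, rfl⟩
  rw [h3.2.tsum_eq]
  refine AbsSum.congr (fun p => ?_) h2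
  simp only [heckeTerm]
  split_ifs <;> simp

/-! ### The residue classes `N ≡ 1, 3` -/

theorem neg_one_zpow_congr {a b : ℤ} (h : ∃ k, a = b + 2 * k) : (-1 : ℂ) ^ a = (-1) ^ b := by
  obtain ⟨k, rfl⟩ := h
  rw [zpow_add₀ (by norm_num), neg_one_zpow_even, mul_one]

theorem neg_one_zpow_succ (a : ℤ) : (-1 : ℂ) ^ (a + 1) = -(-1) ^ a := by
  rw [zpow_add_one₀ (by norm_num)]; ring

theorem neg_one_pow_mul_zpow (N : ℕ) (t : ℤ) : (-1 : ℂ) ^ N * (-1) ^ t = (-1) ^ ((N : ℤ) + t) := by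
  rw [zpow_add₀ (by norm_num), zpow_natCast]

theorem zpow_five_mul {x q : ℂ} (h : x ^ 5 = q) (k : ℤ) : x ^ (5 * k) = q ^ k := by
  rw [zpow_mul, ← h]
  norm_cast

theorem Jba_theta {b a : ℕ} (hab : a ≤ b) {q : ℂ} (hq0 : q ≠ 0) :
    Jba b a q = theta (q ^ b) (q ^ a) := by
  unfold Jba theta
  rw [pow_sub₀ q hq0 hab, div_eq_mul_inv]

theorem theta_absSum {q w : ℂ} (hq : ‖q‖ < 1) (hq0 : q ≠ 0) (hw : w ≠ 0) :
    AbsSum (fun k : ℤ => (-1) ^ k * q ^ tri k * w ^ k) (theta q w) :=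
  theta_laurent hq hq0 w hw

theorem AbsSum.split_int {f : ℤ → ℂ} {v : ℂ} (h : AbsSum f v) :
    ∃ v₁ v₂, v₁ + v₂ = v ∧ AbsSum (fun n : ℕ => f n) v₁ ∧
      AbsSum (fun n : ℕ => f (-((n : ℤ) + 1))) v₂ := by
  have h1 := AbsSum.of_summable (f := fun n : ℕ => f n) (h.1.comp_injective Nat.cast_injective)
  have h2 := AbsSum.of_summable (f := fun n : ℕ => f (-((n : ℤ) + 1)))
    (h.1.comp_injective (i := fun n : ℕ => -((n : ℤ) + 1)) (fun a b h => by simpa using h))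
  exact ⟨_, _, (h1.2.of_nat_of_neg_add_one h2.2).unique h.2, h1, h2⟩

/-- The terms with `N ≡ 1, 3` and `t ≡ 4` modulo `5`. -/
noncomputable def sideTerm (x : ℂ) (p : ℕ × ℤ) : ℂ :=
  if InCone p ∧ p.2 % 5 = 4 ∧ (p.1 % 5 = 1 ∨ p.1 % 5 = 3) then
    (-1) ^ ((p.1 : ℤ) + p.2) * x ^ heckeExp p else 0

/-- The terms with `N ≡ 1, 3` and `t ≡ 4` modulo `5` are the terms of the double series of `R̃(q,q⁵)`,
with the boundary terms `N = 2t` missing and boundary terms `N + 1 = -2t` in excess. -/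
theorem sideTerm_absSum {x q : ℂ} (hx : x ^ 5 = q) (hq : ‖q‖ < 1) (hq0 : q ≠ 0) :
    AbsSum (sideTerm x) (rankGFtilde q (q ^ 5) - Jba 5 2 q) := by
  have hq5 : ‖q ^ 5‖ < 1 := by rw [norm_pow]; exact pow_lt_one₀ (norm_nonneg _) hq (by norm_num)
  have hq50 : q ^ 5 ≠ 0 := pow_ne_zero _ hq0
  -- The two halves of the Hecke-type series of `rankGFtilde q (q ^ 5)`.
  have hT : ∀ f : ℕ × ℤ → ℤ, (∀ p, InCone p → (p.1 : ℤ) ≤ 4 * f p) →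
      Summable (fun p => ‖if InCone p then (-1) ^ ((p.1 : ℤ) + p.2) * q ^ f p else 0‖) :=
    fun f hf => cone_summable hq0 hq f hf (fun p => (-1) ^ ((p.1 : ℤ) + p.2)) 1 fun p => by
      rw [norm_zpow, norm_neg, norm_one, one_zpow]
  have hT1 := AbsSum.of_summable (hT (fun p => 5 * heckeExp p + p.1 + 1) fun p hp => by
    have := heckeExp_bound hp
    have : (0 : ℤ) ≤ p.1 := Int.natCast_nonneg _
    omega)
  have hT2 := AbsSum.of_summable (hT (fun p => 5 * heckeExp p - p.1) fun p hp => by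
    have := heckeExp_bound hp
    omega)
  set v1 := ∑' p : ℕ × ℤ, (if InCone p then
    (-1 : ℂ) ^ ((p.1 : ℤ) + p.2) * q ^ (5 * heckeExp p + p.1 + 1) else 0)
  set v2 := ∑' p : ℕ × ℤ, (if InCone p then
    (-1 : ℂ) ^ ((p.1 : ℤ) + p.2) * q ^ (5 * heckeExp p - p.1) else 0)
  have hv : v1 + v2 = rankGFtilde q (q ^ 5) := by
    have h1 : AbsSum (heckeTerm q (q ^ 5)) (v1 + v2) := by
      refine AbsSum.congr (fun p => ?_) (hT1.add hT2)
      unfold heckeTerm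
      split_ifs with h
      · have e1 : (q ^ 5 : ℂ) ^ heckeExp p = q ^ (5 * heckeExp p) := by
          rw [zpow_mul]; norm_cast
        have e2 : q ^ (5 * heckeExp p + p.1 + 1) = q ^ (5 * heckeExp p) * q ^ (p.1 + 1) := by
          rw [add_assoc, zpow_add₀ hq0]; norm_cast
        rw [e1, e2, sub_eq_add_neg, zpow_add₀ hq0, neg_one_pow_mul_zpow]
        ring
      · rw [add_zero]
    refine h1.unique (heckeTerm_absSum hq5 hq50 ?_ ?_ h1.1)
    · rw [norm_pow]
      exact pow_lt_self_of_lt_one₀ (norm_pos_iff.mpr hq0) hq (by norm_num)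
    · rw [← pow_succ', norm_pow]
      exact pow_lt_one₀ (norm_nonneg _) hq (by norm_num)
  -- The boundary contributions form the theta series `Jba 5 2 q`.
  have hJ : AbsSum (fun s : ℤ => (-1) ^ s * q ^ (5 * tri s + 3 * s)) (Jba 5 2 q) := by
    have h1 := theta_absSum hq5 hq50 (w := q ^ 3) (pow_ne_zero _ hq0)
    have h2 : theta (q ^ 5) (q ^ 3) = Jba 5 2 q := by
      rw [← Jba_theta (by norm_num) hq0]
      simp only [Jba, Nat.reduceSub]
      ring
    rw [h2] at h1
    refine AbsSum.congr (fun s => ?_) h1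
    rw [zpow_add₀ hq0, zpow_mul, zpow_mul, mul_assoc]
    norm_cast
  obtain ⟨d1, d2, hd, hd1, hd2⟩ := hJ.split_int
  -- The points `(2m, m)` on one edge of the cone.
  have hD1 : AbsSum (fun p : ℕ × ℤ => if (p.1 : ℤ) = 2 * p.2 then
      (-1) ^ ((p.1 : ℤ) + p.2) * q ^ (5 * heckeExp p - p.1) else 0) d1 := by
    have hinj : Function.Injective (fun m : ℕ => ((2 * m, (m : ℤ)) : ℕ × ℤ)) := fun a b h => by
      simpa using (Prod.ext_iff.mp h).2
    rw [← AbsSum.of_injective hinj]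
    · refine AbsSum.congr (fun m => ?_) hd1
      have e1 : 5 * heckeExp (2 * m, m) - ((2 * m : ℕ) : ℤ) = 5 * tri m + 3 * m := by
        have a1 := two_tri (((2 * m : ℕ) : ℤ) + 1)
        have a2 := two_pen m
        have a3 := two_tri m
        simp only [heckeExp]
        push_cast at a1 ⊢
        linarith
      have e2 : (-1 : ℂ) ^ (((2 * m : ℕ) : ℤ) + m) = (-1) ^ (m : ℤ) :=
        neg_one_zpow_congr ⟨m, by push_cast; ring⟩
      have h0 : ((2 * m : ℕ) : ℤ) = 2 * (m : ℤ) := by push_cast; ring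
      change (if ((2 * m : ℕ) : ℤ) = 2 * (m : ℤ) then _ else _) = _
      rw [if_pos h0]
      change (-1 : ℂ) ^ (((2 * m : ℕ) : ℤ) + m) * q ^ (5 * heckeExp (2 * m, m) - ((2 * m : ℕ) : ℤ)) = _
      rw [e1, e2]
    · rintro ⟨n, s⟩ hk
      rw [if_neg]
      intro h
      simp only at h
      exact hk ⟨s.toNat, Prod.ext (by simp only; omega) (by simp only; omega)⟩
  -- The points `(2m + 1, -m - 1)` just outside the other edge.
  have hD2 : AbsSum (fun p : ℕ × ℤ => if (p.1 : ℤ) + 1 = -(2 * p.2) then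
      (-1) ^ ((p.1 : ℤ) + p.2) * q ^ (5 * heckeExp p + p.1 + 1) else 0) (-1 * d2) := by
    have hinj : Function.Injective (fun m : ℕ => ((2 * m + 1, -((m : ℤ) + 1)) : ℕ × ℤ)) :=
      fun a b h => by simpa using (Prod.ext_iff.mp h).2
    rw [← AbsSum.of_injective hinj]
    · refine AbsSum.congr (fun m => ?_) (hd2.const_mul (-1))
      have e1 : 5 * heckeExp (2 * m + 1, -((m : ℤ) + 1)) + ((2 * m + 1 : ℕ) : ℤ) + 1 =
          5 * tri (-((m : ℤ) + 1)) + 3 * (-((m : ℤ) + 1)) := by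
        have a1 := two_tri (((2 * m + 1 : ℕ) : ℤ) + 1)
        have a2 := two_pen (-((m : ℤ) + 1))
        have a3 := two_tri (-((m : ℤ) + 1))
        simp only [heckeExp]
        push_cast at a1 ⊢
        linarith
      have e2 : (-1 : ℂ) ^ (((2 * m + 1 : ℕ) : ℤ) + -((m : ℤ) + 1)) =
          -(-1) ^ (-((m : ℤ) + 1)) := by
        rw [← neg_one_zpow_succ]
        exact neg_one_zpow_congr ⟨m, by push_cast; ring⟩
      have h0 : ((2 * m + 1 : ℕ) : ℤ) + 1 = -(2 * -((m : ℤ) + 1)) := by push_cast; ring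
      change (if ((2 * m + 1 : ℕ) : ℤ) + 1 = -(2 * -((m : ℤ) + 1)) then _ else _) = _
      rw [if_pos h0]
      change (-1 : ℂ) ^ (((2 * m + 1 : ℕ) : ℤ) + -((m : ℤ) + 1)) *
        q ^ (5 * heckeExp (2 * m + 1, -((m : ℤ) + 1)) + ((2 * m + 1 : ℕ) : ℤ) + 1) = _
      rw [e1, e2]
      ring
    · rintro ⟨n, s⟩ hk
      rw [if_neg]
      intro h
      simp only at h
      exact hk ⟨(-s - 1).toNat, Prod.ext (by simp only; omega) (by simp only; omega)⟩
  -- The residue classes `N ≡ 1` and `N ≡ 3`.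
  have hB1 : AbsSum (fun p : ℕ × ℤ => if InCone p ∧ p.2 % 5 = 4 ∧ p.1 % 5 = 1 then
      (-1) ^ ((p.1 : ℤ) + p.2) * x ^ heckeExp p else 0) (v2 + -1 * d1) := by
    have hinj : Function.Injective (fun p : ℕ × ℤ => ((5 * p.1 + 1, -5 * p.2 - 1) : ℕ × ℤ)) :=
      fun a b h => by
        obtain ⟨h1, h2⟩ := Prod.ext_iff.mp h
        simp only at h1 h2
        exact Prod.ext (by omega) (by omega)
    rw [← AbsSum.of_injective hinj]
    · refine AbsSum.congr (fun p => ?_) (hT2.add (hD1.const_mul (-1)))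
      obtain ⟨n, s⟩ := p
      have e1 : heckeExp (5 * n + 1, -5 * s - 1) = 5 * (5 * heckeExp (n, s) - n) := by
        have a1 := two_tri (((5 * n + 1 : ℕ) : ℤ) + 1)
        have a2 := two_pen (-5 * s - 1)
        have a3 := two_tri ((n : ℤ) + 1)
        have a4 := two_pen s
        simp only [heckeExp]
        push_cast at a1 ⊢
        linarith
      have e2 : (-1 : ℂ) ^ (((5 * n + 1 : ℕ) : ℤ) + (-5 * s - 1)) = (-1) ^ ((n : ℤ) + s) :=
        neg_one_zpow_congr ⟨2 * n - 3 * s, by push_cast; ring⟩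
      have e3 : (InCone (5 * n + 1, -5 * s - 1) ∧ (-5 * s - 1) % 5 = 4 ∧ (5 * n + 1) % 5 = 1) ↔
          InCone (n, s) ∧ ¬ (n : ℤ) = 2 * s := by
        simp only [InCone]
        push_cast
        omega
      change (if InCone (5 * n + 1, -5 * s - 1) ∧ (-5 * s - 1) % 5 = 4 ∧ (5 * n + 1) % 5 = 1 then
        (-1 : ℂ) ^ (((5 * n + 1 : ℕ) : ℤ) + (-5 * s - 1)) * x ^ heckeExp (5 * n + 1, -5 * s - 1)
        else 0) = _
      rw [e1, e2, zpow_five_mul hx]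
      simp only [e3]
      have e4 : (n : ℤ) = 2 * s → InCone (n, s) := by
        simp only [InCone]
        omega
      by_cases h1 : InCone (n, s) <;> by_cases h2 : (n : ℤ) = 2 * s <;> simp [h1, h2]
      exact absurd (e4 h2) h1
    · rintro ⟨n, s⟩ hk
      rw [if_neg]
      rintro ⟨-, h2, h3⟩
      simp only at h2 h3
      exact hk ⟨(n / 5, -(s / 5) - 1), Prod.ext (by simp only; omega) (by simp only; omega)⟩
  have hB3 : AbsSum (fun p : ℕ × ℤ => if InCone p ∧ p.2 % 5 = 4 ∧ p.1 % 5 = 3 then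
      (-1) ^ ((p.1 : ℤ) + p.2) * x ^ heckeExp p else 0) (v1 + -1 * d2) := by
    have hinj : Function.Injective (fun p : ℕ × ℤ => ((5 * p.1 + 3, -5 * p.2 - 1) : ℕ × ℤ)) :=
      fun a b h => by
        obtain ⟨h1, h2⟩ := Prod.ext_iff.mp h
        simp only at h1 h2
        exact Prod.ext (by omega) (by omega)
    rw [← AbsSum.of_injective hinj]
    · refine AbsSum.congr (fun p => ?_) (hT1.add hD2)
      obtain ⟨n, s⟩ := p
      have e1 : heckeExp (5 * n + 3, -5 * s - 1) = 5 * (5 * heckeExp (n, s) + n + 1) := by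
        have a1 := two_tri (((5 * n + 3 : ℕ) : ℤ) + 1)
        have a2 := two_pen (-5 * s - 1)
        have a3 := two_tri ((n : ℤ) + 1)
        have a4 := two_pen s
        simp only [heckeExp]
        push_cast at a1 ⊢
        linarith
      have e2 : (-1 : ℂ) ^ (((5 * n + 3 : ℕ) : ℤ) + (-5 * s - 1)) = (-1) ^ ((n : ℤ) + s) :=
        neg_one_zpow_congr ⟨2 * n - 3 * s + 1, by push_cast; ring⟩
      have e3 : (InCone (5 * n + 3, -5 * s - 1) ∧ (-5 * s - 1) % 5 = 4 ∧ (5 * n + 3) % 5 = 3) ↔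
          InCone (n, s) ∨ (n : ℤ) + 1 = -(2 * s) := by
        simp only [InCone]
        push_cast
        omega
      change (if InCone (5 * n + 3, -5 * s - 1) ∧ (-5 * s - 1) % 5 = 4 ∧ (5 * n + 3) % 5 = 3 then
        (-1 : ℂ) ^ (((5 * n + 3 : ℕ) : ℤ) + (-5 * s - 1)) * x ^ heckeExp (5 * n + 3, -5 * s - 1)
        else 0) = _
      rw [e1, e2, zpow_five_mul hx]
      simp only [e3]
      have e4 : (n : ℤ) + 1 = -(2 * s) → ¬ InCone (n, s) := by
        simp only [InCone]
        omega
      by_cases h1 : InCone (n, s) <;> by_cases h2 : (n : ℤ) + 1 = -(2 * s) <;> simp [h1, h2]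
      exact absurd h1 (e4 h2)
    · rintro ⟨n, s⟩ hk
      rw [if_neg]
      rintro ⟨-, h2, h3⟩
      simp only at h2 h3
      exact hk ⟨(n / 5, -(s / 5) - 1), Prod.ext (by simp only; omega) (by simp only; omega)⟩
  have hval : rankGFtilde q (q ^ 5) - Jba 5 2 q = (v2 + -1 * d1) + (v1 + -1 * d2) := by
    rw [← hv, ← hd]; ring
  rw [hval]
  refine AbsSum.congr (fun p => ?_) (hB1.add hB3)
  unfold sideTerm
  by_cases h1 : InCone p <;> by_cases h2 : p.2 % 5 = 4 <;> by_cases h3 : p.1 % 5 = 1 <;>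
    by_cases h4 : p.1 % 5 = 3 <;> simp [h1, h2, h3, h4]

/-! ### The section at `z = 1` and the residue classes modulo five -/

theorem euler_absSum {x : ℂ} (hx : ‖x‖ < 1) :
    AbsSum (fun t : ℤ => (-1) ^ t * x ^ pen t) (qPochInf x x) := by
  have h1 := pentagonal_complex hx
  rw [← qp_self_eq] at h1
  have h2 : AbsSum _ _ := ⟨h1.summable.norm, h1⟩
  refine AbsSum.equiv (Equiv.neg ℤ) (fun t => ?_) h2
  have e1 : (-1 : ℂ) ^ t = (-1) ^ (-t) := neg_one_zpow_congr ⟨t, by ring⟩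
  have e2 : pen t = ((pentagonal (-t) : ℕ) : ℤ) := by
    have a1 := two_pen t
    have a2 := two_mul_natCast_pentagonal (-t)
    linarith
  rw [e1, e2, zpow_natCast]
  rfl

/-- At `z = 1` the rank generating function counts partitions; the sum over the largest part
telescopes. -/
theorem rankGF_one {q : ℂ} (hq : ‖q‖ < 1) : rankGF 1 q = (qPochInf q q)⁻¹ := by
  have h1 := (rank_family (w := 1) hq one_ne_zero (by rwa [one_mul]) (by rwa [div_one])).2.2
  rw [inv_one] at h1
  have h2 := (qp_tendsto q hq).inv₀ (qp_ne_zero' hq hq)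
  have hne : ∀ m : ℕ, (1 - q ^ (m + 1)) ≠ 0 := fun m h => by
    have h3 : ‖q ^ (m + 1)‖ < 1 := by
      rw [norm_pow]; exact pow_lt_one₀ (norm_nonneg _) hq (by omega)
    rw [← sub_eq_zero.mp h, norm_one] at h3
    exact lt_irrefl _ h3
  have hsum : ∀ n : ℕ, ∑ m ∈ Finset.range n, (1 : ℂ) ^ m * q ^ (m + 1) *
      (∏ i ∈ Finset.range (m + 1), (1 - 1 * q ^ (i + 1)))⁻¹ =
      (∏ k ∈ Finset.range n, (1 - q * q ^ k))⁻¹ - 1 := by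
    intro n
    induction n with
    | zero => simp
    | succ n ih =>
      rw [Finset.sum_range_succ, ih]
      simp only [one_pow, one_mul, ← pow_succ']
      rw [Finset.prod_range_succ, mul_inv]
      field_simp [hne n]
      ring
  have h3 := h1.tendsto_sum_nat
  simp only [hsum] at h3
  have h4 := tendsto_nhds_unique h3 (h2.sub_const 1)
  linear_combination h4

theorem rankGFtilde_one {q : ℂ} (hq : ‖q‖ < 1) : rankGFtilde 1 q = 2 * qPochInf q q ^ 2 := by
  have h := qp_ne_zero' hq hq
  rw [rankGFtilde, rankGF_one hq]
  norm_num
  field_simp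

/-- The part of Euler's pentagonal series with exponents divisible by `5`, as an average of the values
of `(y;y)_∞` at the points `y = ζ^j x`. -/
noncomputable def penFive (x : ℂ) : ℂ :=
  1 / 5 * ∑ j ∈ Finset.range 5, qPochInf (zeta5 ^ j * x) (zeta5 ^ j * x)

theorem zeta5_mul_norm {x : ℂ} (hx : ‖x‖ < 1) (j : ℕ) : ‖zeta5 ^ j * x‖ < 1 := by
  rw [norm_mul, norm_pow, zeta5_norm, one_pow, one_mul]; exact hx

theorem zeta5_mul_ne_zero {x : ℂ} (hx0 : x ≠ 0) (j : ℕ) : zeta5 ^ j * x ≠ 0 :=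
  mul_ne_zero (pow_ne_zero _ (zeta5_prim.ne_zero (by norm_num))) hx0

theorem penFive_absSum {x : ℂ} (hx : ‖x‖ < 1) :
    AbsSum (fun t : ℤ => if 5 ∣ pen t then (-1) ^ t * x ^ pen t else 0) (penFive x) :=
  section_absSum (f := fun y => qPochInf y y) fun j => euler_absSum (zeta5_mul_norm hx j)

theorem pen_mod_five (t : ℤ) : pen t % 5 = 0 ∨ pen t % 5 = 1 ∨ pen t % 5 = 2 := by
  have h := two_pen t
  obtain ⟨a, r, h1, h2, h3⟩ : ∃ a r : ℤ, t = 5 * a + r ∧ 0 ≤ r ∧ r < 5 :=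
    ⟨t / 5, t % 5, by omega, by omega, by omega⟩
  generalize pen t = P at h ⊢
  subst h1
  interval_cases r <;> ring_nf at h <;> omega

/-- The terms of the Hecke-type series whose exponent is divisible by `5`, without the factor
depending on `z`. -/
noncomputable def pureTerm (x : ℂ) (p : ℕ × ℤ) : ℂ :=
  if InCone p ∧ 5 ∣ heckeExp p then (-1) ^ ((p.1 : ℤ) + p.2) * x ^ heckeExp p else 0

/-- The `5`-section of `(x;x)_∞²` computed in two ways: from the double series at `z = 1`, and as the
square of the `5`-section of `(x;x)_∞`, because two residues among `0, 1, 2` have sum divisible by `5`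
only if both are zero. -/
theorem pureTerm_absSum {x : ℂ} (hx : ‖x‖ < 1) (hx0 : x ≠ 0) :
    AbsSum (pureTerm x) (penFive x ^ 2) := by
  -- Both sides are the sections of the two double series for `(x;x)²`.
  have h1 := section_absSum (x := x) (f := fun y => qPochInf y y ^ 2) (e := heckeExp)
    (c := fun p => if InCone p then (-1) ^ ((p.1 : ℤ) + p.2) else 0) (fun j => by
      have h := (heckeTerm_absSum_one (zeta5_mul_norm hx j) (zeta5_mul_ne_zero hx0 j)
        norm_one).const_mul (1 / 2)
      rw [rankGFtilde_one (zeta5_mul_norm hx j)] at h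
      rw [show qPochInf (zeta5 ^ j * x) (zeta5 ^ j * x) ^ 2 =
        1 / 2 * (2 * qPochInf (zeta5 ^ j * x) (zeta5 ^ j * x) ^ 2) by ring]
      refine AbsSum.congr (fun p => ?_) h
      unfold heckeTerm
      by_cases hp : InCone p
      · simp only [hp, if_true, one_pow, one_zpow, neg_one_pow_mul_zpow]
        ring
      · simp [hp])
  have h2 := section_absSum (x := x) (f := fun y => qPochInf y y ^ 2)
    (e := fun p : ℤ × ℤ => pen p.1 + pen p.2)
    (c := fun p : ℤ × ℤ => (-1) ^ p.1 * (-1) ^ p.2) (fun j => by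
      have h := euler_absSum (zeta5_mul_norm hx j)
      have h' := h.mul h
      rw [← pow_two] at h'
      refine AbsSum.congr (fun p => ?_) h'
      rw [zpow_add₀ (zeta5_mul_ne_zero hx0 j)]
      ring)
  have h3 := (penFive_absSum hx).mul (penFive_absSum hx)
  rw [← pow_two] at h3
  have h4 := h2.unique (AbsSum.congr (fun p => ?_) h3)
  · rw [h4] at h1
    refine AbsSum.congr (fun p => ?_) h1
    unfold pureTerm
    by_cases hp : InCone p <;> by_cases hd : 5 ∣ heckeExp p <;> simp [hp, hd]
  · obtain ⟨t, u⟩ := p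
    have a1 := pen_mod_five t
    have a2 := pen_mod_five u
    have e : 5 ∣ pen t + pen u ↔ 5 ∣ pen t ∧ 5 ∣ pen u := by omega
    simp only [e]
    by_cases ht : 5 ∣ pen t <;> by_cases hu : 5 ∣ pen u <;> simp [ht, hu]
    rw [zpow_add₀ hx0]
    ring

theorem heckeExp_mod_five (N : ℕ) (t : ℤ) : 5 ∣ heckeExp (N, t) ↔
    ((N % 5 = 0 ∨ N % 5 = 4) ∧ (t % 5 = 0 ∨ t % 5 = 3)) ∨
      (t % 5 = 4 ∧ (N % 5 = 1 ∨ N % 5 = 3)) := by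
  have e1 := two_tri ((N : ℤ) + 1)
  have e2 := two_pen t
  have e3 : heckeExp (N, t) = tri ((N : ℤ) + 1) - pen t := rfl
  rw [e3]
  generalize tri ((N : ℤ) + 1) = T at e1 ⊢
  generalize pen t = P at e2 ⊢
  obtain ⟨a, r, h1, h2⟩ : ∃ a r : ℕ, N = 5 * a + r ∧ r < 5 := ⟨N / 5, N % 5, by omega, by omega⟩
  obtain ⟨b, s, h3, h4, h5⟩ : ∃ b s : ℤ, t = 5 * b + s ∧ 0 ≤ s ∧ s < 5 :=
    ⟨t / 5, t % 5, by omega, by omega, by omega⟩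
  subst h1 h3
  have eT : T % 5 = (r * (r + 1) * 3) % 5 := by
    push_cast at e1
    interval_cases r <;> ring_nf at e1 <;> omega
  have eP : P % 5 = (s * (3 * s + 1) * 3) % 5 := by
    interval_cases s <;> ring_nf at e2 <;> omega
  interval_cases r <;> interval_cases s <;> norm_num at eT eP <;> omega

theorem zeta5_factor (N : ℕ) :
    ((N % 5 = 0 ∨ N % 5 = 4) → zeta5 ^ (N + 1) + zeta5 ^ (-(N : ℤ)) = 1 + zeta5) ∧
    ((N % 5 = 1 ∨ N % 5 = 3) → zeta5 ^ (N + 1) + zeta5 ^ (-(N : ℤ)) = zeta5 ^ 2 + zeta5 ^ 4) := by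
  have h5 := zeta5_pow
  obtain ⟨a, r, h1, h2⟩ : ∃ a r : ℕ, N = 5 * a + r ∧ r < 5 := ⟨N / 5, N % 5, by omega, by omega⟩
  have e1 : zeta5 ^ N = zeta5 ^ r := by rw [h1, pow_add, pow_mul, h5, one_pow, one_mul]
  have e2 : zeta5 ^ (-(N : ℤ)) = zeta5 ^ (5 - r) := by
    rw [zpow_neg, zpow_natCast, e1]
    refine inv_eq_of_mul_eq_one_right ?_
    rw [← pow_add]
    rw [show r + (5 - r) = 5 by omega, h5]
  rw [pow_succ, e1, e2]
  have hr : N % 5 = r := by omega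
  rw [hr]
  interval_cases r <;> norm_num
  · rw [h5]; ring
  · ring
  · ring
  · linear_combination h5

/-- The extracted series, with the section of the Euler product still in its form `penFive`. -/
theorem U5_value {a : ℕ → ℂ}
    (ha : ∀ q : ℂ, ‖q‖ < 1 → rankGFtilde zeta5 q = ∑' n : ℕ, a n * q ^ n) {x q : ℂ}
    (hxq : x ^ 5 = q) (hx : ‖x‖ < 1) (hx0 : x ≠ 0) (hq : ‖q‖ < 1) (hq0 : q ≠ 0) :
    ∑' n : ℕ, a (5 * n) * q ^ n = (1 + zeta5) * penFive x ^ 2 -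
      (2 + 2 * zeta5 + zeta5 ^ 3) * (rankGFtilde q (q ^ 5) - Jba 5 2 q) := by
  have h1 := U5_hecke ha hx hx0
  rw [hxq] at h1
  have h2 := ((pureTerm_absSum hx hx0).const_mul (1 + zeta5)).add
    ((sideTerm_absSum hxq hq hq0).const_mul (zeta5 ^ 2 + zeta5 ^ 4 - (1 + zeta5)))
  have h3 := h1.unique (AbsSum.congr (fun p => ?_) h2)
  · rw [h3]
    linear_combination (rankGFtilde q (q ^ 5) - Jba 5 2 q) * zeta5_sum
  · obtain ⟨N, t⟩ := p
    obtain ⟨z1, z2⟩ := zeta5_factor N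
    have hm := heckeExp_mod_five N t
    simp only [heckeTerm, pureTerm, sideTerm, neg_one_pow_mul_zpow]
    by_cases hc : InCone (N, t)
    · by_cases hd : 5 ∣ heckeExp (N, t)
      · rcases hm.mp hd with ⟨hN, ht⟩ | ⟨ht, hN⟩
        · have h4 : ¬ (t % 5 = 4) := by omega
          simp only [hc, hd, h4, z1 hN, if_true, and_self, true_and, false_and, if_false]
          ring
        · simp only [hc, hd, ht, hN, z2 hN, if_true, and_self]
          ring
      · have h4 : ¬ (t % 5 = 4 ∧ (N % 5 = 1 ∨ N % 5 = 3)) := fun h => hd (hm.mpr (Or.inr h))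
        simp only [hd, h4, and_false, if_false]
        ring
    · simp only [hc, false_and, if_false]
      split_ifs <;> ring

/-! ### The section of the Euler product -/

theorem five_dvd_pen (t : ℤ) : 5 ∣ pen t ↔ t % 5 = 0 ∨ t % 5 = 3 := by
  have h := two_pen t
  obtain ⟨a, r, h1, h2, h3⟩ : ∃ a r : ℤ, t = 5 * a + r ∧ 0 ≤ r ∧ r < 5 :=
    ⟨t / 5, t % 5, by omega, by omega, by omega⟩
  generalize pen t = P at h ⊢
  subst h1
  interval_cases r <;> ring_nf at h <;> omega

/-- The terms of `penFive` come from `t = 5 s` and `t = -5 s - 2`. -/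
theorem penFive_split {x q : ℂ} (hxq : x ^ 5 = q) (hx : ‖x‖ < 1) :
    ∃ A B, A + B = penFive x ∧
      AbsSum (fun s : ℤ => (-1) ^ s * q ^ (15 * tri s + 8 * s)) A ∧
      AbsSum (fun s : ℤ => (-1) ^ s * q ^ (15 * tri s + 13 * s + 1)) B := by
  have h := penFive_absSum hx
  have hi1 : Function.Injective (fun s : ℤ => 5 * s) := fun a b h => by simpa using h
  have hi2 : Function.Injective (fun s : ℤ => -5 * s - 2) := fun a b h => by simpa using h
  have p1 : ∀ s, pen (5 * s) = 5 * (15 * tri s + 8 * s) := fun s => by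
    have a1 := two_pen (5 * s)
    have a2 := two_tri s
    linarith
  have p2 : ∀ s, pen (-5 * s - 2) = 5 * (15 * tri s + 13 * s + 1) := fun s => by
    have a1 := two_pen (-5 * s - 2)
    have a2 := two_tri s
    linarith
  have s1 : ∀ s : ℤ, (-1 : ℂ) ^ (5 * s) = (-1) ^ s := fun s =>
    neg_one_zpow_congr ⟨2 * s, by ring⟩
  have s2 : ∀ s : ℤ, (-1 : ℂ) ^ (-5 * s - 2) = (-1) ^ s := fun s =>
    neg_one_zpow_congr ⟨-3 * s - 1, by ring⟩
  have h1 := AbsSum.of_summable (f := fun s : ℤ => (-1 : ℂ) ^ s * q ^ (15 * tri s + 8 * s)) <|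
    (h.1.comp_injective hi1).congr fun s => by
      simp only [Function.comp, p1, s1, zpow_five_mul hxq, dvd_mul_right, if_true]
  have h2 := AbsSum.of_summable
    (f := fun s : ℤ => (-1 : ℂ) ^ s * q ^ (15 * tri s + 13 * s + 1)) <|
    (h.1.comp_injective hi2).congr fun s => by
      simp only [Function.comp, p2, s2, zpow_five_mul hxq, dvd_mul_right, if_true]
  refine ⟨_, _, ?_, h1, h2⟩
  have g1 : AbsSum (fun t : ℤ => if t % 5 = 0 then (-1) ^ t * x ^ pen t else 0) _ :=
    (AbsSum.of_injective hi1 (fun t ht => by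
      rw [if_neg]
      intro h
      exact ht ⟨t / 5, by simp only; omega⟩)).mp (AbsSum.congr (fun s => by
        have e3 : 5 * s % 5 = 0 := by omega
        simp only [Function.comp, p1, s1, e3, zpow_five_mul hxq, if_true]) h1)
  have g2 : AbsSum (fun t : ℤ => if t % 5 = 3 then (-1) ^ t * x ^ pen t else 0) _ :=
    (AbsSum.of_injective hi2 (fun t ht => by
      rw [if_neg]
      intro h
      exact ht ⟨-(t / 5) - 1, by simp only; omega⟩)).mp (AbsSum.congr (fun s => by
        have e3 : (-5 * s - 2) % 5 = 3 := by omega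
        simp only [Function.comp, p2, s2, e3, zpow_five_mul hxq, if_true]) h2)
  refine (g1.add g2).unique (AbsSum.congr (fun t => ?_) h)
  have hd := five_dvd_pen t
  by_cases h0 : t % 5 = 0
  · simp [hd, h0]
  · simp [hd, h0]

/-- One of the three residue classes in the product of two theta series: a unimodular change of
variables factors the double sum. -/
theorem AbsSum.class_factor {F : ℤ × ℤ → ℂ} {f g : ℤ → ℂ} {v w : ℂ} (c : ℤ)
    (hf : AbsSum f v) (hg : AbsSum g w)
    (h : ∀ r s : ℤ, F (s + c - 2 * r, s + r) = f r * g s) :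
    AbsSum (fun p : ℤ × ℤ => if (p.1 + 2 * p.2 - c) % 3 = 0 then F p else 0) (v * w) := by
  have hinj : Function.Injective (fun p : ℤ × ℤ => (p.2 + c - 2 * p.1, p.2 + p.1)) :=
    fun a b h => by
      obtain ⟨h1, h2⟩ := Prod.ext_iff.mp h
      simp only at h1 h2
      exact Prod.ext (by omega) (by omega)
  rw [← AbsSum.of_injective hinj]
  · refine AbsSum.congr (fun p => ?_) (hf.mul hg)
    have e : (p.2 + c - 2 * p.1 + 2 * (p.2 + p.1) - c) % 3 = 0 := by omega
    simp only [Function.comp, e, if_true, h]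
  · rintro ⟨m, n⟩ hk
    rw [if_neg]
    intro h0
    simp only at h0
    exact hk ⟨(n - (m + 2 * n - c) / 3, (m + 2 * n - c) / 3),
      Prod.ext (by simp only; omega) (by simp only; omega)⟩

/-- The product of the two theta series on the right is a double sum over `(m, n)`, split by
`m + 2n` modulo `3`. The classes `0` and `1` give `(q¹⁰;q¹⁰)_∞` times the two halves of `penFive`; the
third class has the factor `Σ (-1)^r q^{15 r (r + 1)} = 0`. -/
theorem penFive_theta {x q : ℂ} (hxq : x ^ 5 = q) (hx : ‖x‖ < 1) (hq : ‖q‖ < 1) (hq0 : q ≠ 0) :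
    qPochInf (q ^ 10) (q ^ 10) * penFive x =
      theta (q ^ 5) (-q) * theta (q ^ 10) (q ^ 7) := by
  have hn : ∀ n : ℕ, n ≠ 0 → ‖q ^ n‖ < 1 := fun n hn => by
    rw [norm_pow]; exact pow_lt_one₀ (norm_nonneg _) hq hn
  have hz : ∀ n : ℕ, q ^ n ≠ 0 := fun n => pow_ne_zero _ hq0
  have hpw : ∀ (n : ℕ) (k : ℤ), (q ^ n) ^ k = q ^ (n * k) := fun n k => by
    rw [zpow_mul]; norm_cast
  obtain ⟨A, B, hAB, hA, hB⟩ := penFive_split hxq hx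
  have hD := euler_absSum (hn 10 (by norm_num))
  have hD' : AbsSum (fun r : ℤ => (-1) ^ r * (q ^ 10) ^ pen (-r)) (qPochInf (q ^ 10) (q ^ 10)) :=
    AbsSum.equiv (Equiv.neg ℤ) (fun r => by
      have e : (-1 : ℂ) ^ r = (-1) ^ (-r) := neg_one_zpow_congr ⟨r, by ring⟩
      rw [e]
      rfl) hD
  -- The factor of the third residue class is `theta (q³⁰) (q³⁰)`, which contains `1 - 1`.
  have hZ : AbsSum (fun r : ℤ => (-1) ^ r * (q ^ 30) ^ tri r * (q ^ 30) ^ r) 0 := by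
    have h1 := theta_absSum (hn 30 (by norm_num)) (hz 30) (hz 30)
    have h2 : theta (q ^ 30) (q ^ 30) = 0 := by
      rw [theta, div_self (hz 30), qp_succ 1 (hn 30 (by norm_num))]
      ring
    rwa [h2] at h1
  have hV := (theta_absSum (hn 15 (by norm_num)) (hz 15) (hz 3)).const_mul (q ^ 4)
  have hP := (theta_absSum (hn 5 (by norm_num)) (hz 5) (neg_ne_zero.mpr hq0)).mul
    (theta_absSum (hn 10 (by norm_num)) (hz 10) (hz 7))
  set F : ℤ × ℤ → ℂ := fun p =>
    (-1) ^ p.2 * q ^ (5 * tri p.1 + p.1 + 10 * tri p.2 + 7 * p.2) with hF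
  have h0 := AbsSum.class_factor (F := F) 0 hD hA (fun r s => by
    have a1 := two_tri (s + 0 - 2 * r)
    have a2 := two_tri (s + r)
    have a3 := two_tri s
    have a4 := two_pen r
    have e : 5 * tri (s + 0 - 2 * r) + (s + 0 - 2 * r) + 10 * tri (s + r) + 7 * (s + r) =
        10 * pen r + (15 * tri s + 8 * s) := by linarith
    simp only [hF]
    rw [e]
    simp only [hpw, zpow_add₀ hq0, zpow_add₀ (neg_ne_zero.mpr (one_ne_zero' ℂ))]
    push_cast
    ring)
  have h1 := AbsSum.class_factor (F := F) 1 hD' hB (fun r s => by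
    have a1 := two_tri (s + 1 - 2 * r)
    have a2 := two_tri (s + r)
    have a3 := two_tri s
    have a4 := two_pen (-r)
    have e : 5 * tri (s + 1 - 2 * r) + (s + 1 - 2 * r) + 10 * tri (s + r) + 7 * (s + r) =
        10 * pen (-r) + (15 * tri s + 13 * s + 1) := by linarith
    simp only [hF]
    rw [e]
    simp only [hpw, zpow_add₀ hq0, zpow_add₀ (neg_ne_zero.mpr (one_ne_zero' ℂ))]
    push_cast
    ring)
  have h2 := AbsSum.class_factor (F := F) (-1) hZ hV (fun r s => by
    have a1 := two_tri (s + -1 - 2 * r)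
    have a2 := two_tri (s + r)
    have a3 := two_tri s
    have a4 := two_tri r
    have e : 5 * tri (s + -1 - 2 * r) + (s + -1 - 2 * r) + 10 * tri (s + r) + 7 * (s + r) =
        30 * tri r + 30 * r + (4 + 15 * tri s + 3 * s) := by linarith
    simp only [hF]
    rw [e]
    simp only [hpw, zpow_add₀ hq0, zpow_add₀ (neg_ne_zero.mpr (one_ne_zero' ℂ))]
    rw [show q ^ (4 : ℤ) = q ^ 4 from zpow_ofNat q 4]
    push_cast
    ring)
  have h3 := (h0.add h1).add h2
  have h4 := hP.unique (AbsSum.congr (fun p => ?_) h3)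
  · rw [h4, ← hAB]; ring
  · obtain ⟨m, n⟩ := p
    have e : (-q) ^ m = (-1) ^ m * q ^ m := by rw [neg_eq_neg_one_mul, mul_zpow]
    have e1 : (-1 : ℂ) ^ m * (q ^ 5) ^ tri m * (-q) ^ m *
        ((-1) ^ n * (q ^ 10) ^ tri n * (q ^ 7) ^ n) = F (m, n) := by
      rw [e, hpw, hpw, hpw]
      simp only [hF, zpow_add₀ hq0]
      push_cast
      linear_combination (q ^ (5 * tri m) * q ^ m * (-1) ^ n * q ^ (10 * tri n) * q ^ (7 * n)) *
        neg_one_zpow_mul_self m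
    simp only [e1]
    have h5 : (m + 2 * n - 0) % 3 = 0 ∨ (m + 2 * n - 1) % 3 = 0 ∨ (m + 2 * n - (-1)) % 3 = 0 := by
      omega
    rcases h5 with h5 | h5 | h5
    · have h6 : ¬ (m + 2 * n - 1) % 3 = 0 := by omega
      have h7 : ¬ (m + 2 * n - (-1)) % 3 = 0 := by omega
      rw [if_pos h5, if_neg h6, if_neg h7]; ring
    · have h6 : ¬ (m + 2 * n - 0) % 3 = 0 := by omega
      have h7 : ¬ (m + 2 * n - (-1)) % 3 = 0 := by omega
      rw [if_pos h5, if_neg h6, if_neg h7]; ring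
    · have h6 : ¬ (m + 2 * n - 0) % 3 = 0 := by omega
      have h7 : ¬ (m + 2 * n - 1) % 3 = 0 := by omega
      rw [if_pos h5, if_neg h6, if_neg h7]; ring

/-- The section of the Euler product as a quotient: in `penFive_theta`, cancel the factor
`(q¹⁰;q¹⁰)_∞` after rewriting all products with base `q⁵` in base `q¹⁰`. -/
theorem penFive_eq {x q : ℂ} (hxq : x ^ 5 = q) (hx : ‖x‖ < 1) (hq : ‖q‖ < 1) (hq0 : q ≠ 0) :
    penFive x = Jb 5 q * Jba 5 2 q / Jba 5 1 q := by
  have hn : ∀ n : ℕ, n ≠ 0 → ‖q ^ n‖ < 1 := fun n hn => by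
    rw [norm_pow]; exact pow_lt_one₀ (norm_nonneg _) hq hn
  have hne : ∀ m n : ℕ, m ≠ 0 → n ≠ 0 → qPochInf (q ^ m) (q ^ n) ≠ 0 := fun m n hm hn' =>
    qp_ne_zero' (hn n hn') (hn m hm)
  have hJ : Jba 5 1 q ≠ 0 := by
    unfold Jba
    exact mul_ne_zero (mul_ne_zero (hne 1 5 (by norm_num) (by norm_num))
      (hne 4 5 (by norm_num) (by norm_num))) (hne 5 5 (by norm_num) (by norm_num))
  rw [eq_div_iff hJ]
  have h := penFive_theta hxq hx hq hq0
  have hD := hne 10 10 (by norm_num) (by norm_num)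
  have d1 : q ^ 5 / -q = -q ^ 4 := by field_simp
  have d2 : q ^ 10 / q ^ 7 = q ^ 3 := by field_simp
  rw [theta, theta, d1, d2] at h
  have s1 := qp_sq q (hn 5 (by norm_num))
  have s2 := qp_sq (q ^ 4) (hn 5 (by norm_num))
  have t1 := qp_split (q ^ 2) (hn 5 (by norm_num)) (d := 2) (by norm_num)
  have t2 := qp_split (q ^ 3) (hn 5 (by norm_num)) (d := 2) (by norm_num)
  simp only [Finset.prod_range_succ, Finset.prod_range_zero, mul_one, one_mul,
    ← pow_mul, ← pow_add] at s1 s2 t1 t2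
  norm_num at s1 s2 t1 t2
  refine mul_left_cancel₀ hD ?_
  rw [← mul_assoc, h]
  simp only [Jba, Jb, pow_one]
  norm_num
  rw [t1, t2, ← s1, ← s2]
  ring

/-! ### The case `q = 0` and the conclusion -/

theorem qp_zero_left (q : ℂ) : qPochInf 0 q = 1 := by simp [qPochInf]

theorem rankGF_zero (z : ℂ) : rankGF z 0 = 1 := by
  rw [rankGF, tsum_eq_single 0]
  · have : ∀ p : Nat.Partition 0, partitionRank p = 0 := fun p => by
      simp [partitionRank]
    simp [this]
  · intro n hn
    simp [hn]

theorem rankGFtilde_zero (z : ℂ) : rankGFtilde z 0 = 1 + z := by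
  simp [rankGFtilde, rankGF_zero, qp_zero_left]

theorem U50_rankGFtilde (a : ℕ → ℂ)
    (ha : ∀ q : ℂ, ‖q‖ < 1 → rankGFtilde zeta5 q = ∑' n : ℕ, a n * q ^ n) :
    ∀ q : ℂ, ‖q‖ < 1 →
      ∑' n : ℕ, a (5 * n) * q ^ n =
        (1 + zeta5) * (Jb 5 q) ^ 2 * (Jba 5 2 q) ^ 2 / (Jba 5 1 q) ^ 2 -
          (2 + 2 * zeta5 + zeta5 ^ 3) * (rankGFtilde q (q ^ 5) - Jba 5 2 q) := by
  intro q hq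
  have hpow0 : ∀ b : ℕ → ℂ, ∑' n : ℕ, b n * (0 : ℂ) ^ n = b 0 := fun b => by
    rw [tsum_eq_single 0 (fun n hn => by simp [hn])]
    simp
  -- The Laurent expansions above require `q ≠ 0`; at `q = 0` only constant terms remain.
  rcases eq_or_ne q 0 with rfl | hq0
  · have h0 := ha 0 hq
    rw [hpow0, rankGFtilde_zero] at h0
    rw [hpow0 (fun n => a (5 * n)), mul_zero, ← h0]
    simp [Jb, Jba, qp_zero_left, rankGFtilde_zero]
  · obtain ⟨x, hxq⟩ := IsAlgClosed.exists_pow_nat_eq q (n := 5) (by norm_num)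
    have hx0 : x ≠ 0 := by rintro rfl; exact hq0 (by rw [← hxq]; norm_num)
    have hx : ‖x‖ < 1 := by
      rw [← hxq, norm_pow] at hq
      exact lt_of_not_ge fun h => absurd (one_le_pow₀ h) (not_le.mpr hq)
    rw [U5_value ha hxq hx hx0 hq hq0, penFive_eq hxq hx hq hq0]
    ring
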